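/- arXiv:2205.04632 — 3 statements merged into one kernel-verified Lean document; each statement's English description precedes it below -/
import Mathlib

section
/- Fix constants κ, δ, γ̃ > 0 with 2κ < δ, and set δ̂ := κγ̃ − κ²δ. There exist ε₀, C, c > 0 such that for every r with 0 < r ≤ ε₀ and every t ≥ 0: | (cos(λ_I t) e^{λ_R t} − e^{λ₁ t}) / (2λ_R λ₁ − λ_I² − λ_R² − λ₁²) − Ĝ₀(t,r) − Ĥ₀(t,r) | ≤ C e^{-c r² t}, where λ₁ = λ₁(r), λ_R = λ_R(r), λ_I = λ_I(r), Ĝ₀(t,r) := r^{-2}(e^{-κ r² t} − cos(rt) e^{-(δ/2) r² t}) and Ĥ₀(t,r) := ((4δ̂ − κδ²)/(8κ)) r t sin(rt) e^{-(δ/2) r² t}. -/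
/-!
Set `ρ = r²` and rescale the real root as `λ₁ = ρ x`. Vieta's formulas for the root triple
`λ₁, λ_R ± iλ_I` give `λ_R = -((δ+κ)ρ + λ₁)/2` and `λ_R² + λ_I² = ρ (1 + ρ w)` with
`w = x² + (δ+κ)x + γ̃`, while the cubic itself reads `x (1 + ρ w) = -κ`. For small `ρ` this forces
`x = -κ + O(ρ)`, and back-substitution yields, with `m = γ̃ - κδ - δ²/4`,
`λ₁ = -κr² + O(r⁴)`, `λ_R = -(δ/2)r² + O(r⁴)`, `λ_I = r + (m/2)r³ + O(r⁵)`, and minus the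
denominator, `(λ_R - λ₁)² + λ_I²`, equals `r² + O(r⁴)` (`blackstock_roots_expansion`).
Note that `m/2` is exactly the coefficient `(4δ̂ - κδ²)/(8κ)` of `Ĥ₀`.

Replacing the roots and the denominator by these expansions one at a time changes the quotient by
terms bounded by a constant multiple of `(1 + s + s²) e^{-κs/2}`, where `s = r²t`. The one
delicate replacement is that of `cos(λ_I t)` by `cos(rt)`: its first-order Taylor term, divided by
`r²`, is `-(m/2) r t sin(rt)` up to `O(s)`; as the denominator is negative, `Ĥ₀` cancels it, and the
Taylor remainder is `O(((λ_I - r)t)²/r²) = O(s²)`. Half of the exponential absorbs the powers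
of `s`.
-/

/-!
STATEMENT 14. Second-order approximation of the coefficient
`(cos(λ_I t)e^{λ_R t} − e^{λ₁ t})/(2λ_Rλ₁ − λ_I² − λ_R² − λ₁²)` by
`Ĝ₀(t,r) + Ĥ₀(t,r)`, where `Ĝ₀(t,r) = r⁻²(e^{-κr²t} − cos(rt)e^{-(δ/2)r²t})`,
`Ĥ₀(t,r) = ((4δ̂−κδ²)/(8κ)) r t sin(rt) e^{-(δ/2)r²t}` and `δ̂ = κγ̃ − κ²δ`.
-/

noncomputable section

/-- The characteristic cubic of the linear Blackstock model in the Fourier space. -/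
def blackstockCubic (κ δ γt r : ℝ) (z : ℂ) : ℂ :=
  z ^ 3 + (((δ + κ) * r ^ 2 : ℝ) : ℂ) * z ^ 2
    + (((1 + γt * r ^ 2) * r ^ 2 : ℝ) : ℂ) * z + ((κ * r ^ 4 : ℝ) : ℂ)

/-- The radial symbol `Ĝ₀(t,r) = r⁻²(e^{-κr²t} − cos(rt) e^{-(δ/2)r²t})`. -/
def Ghat0 (κ δ t r : ℝ) : ℝ :=
  (Real.exp (-κ * r ^ 2 * t) - Real.cos (r * t) * Real.exp (-(δ / 2) * r ^ 2 * t)) / r ^ 2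

/-- The radial symbol `Ĥ₀(t,r) = ((4δ̂−κδ²)/(8κ)) r t sin(rt) e^{-(δ/2)r²t}`,
with `δ̂ = κγ̃ − κ²δ`. -/
def Hhat0 (κ δ γt t r : ℝ) : ℝ :=
  (4 * (κ * γt - κ ^ 2 * δ) - κ * δ ^ 2) / (8 * κ) * r * t * Real.sin (r * t) *
    Real.exp (-(δ / 2) * r ^ 2 * t)

/-- Vieta's formulas for the root triple `l1, lR ± i lI`, in the form of expressions in the real
root `l1` alone. -/
lemma blackstock_vieta {κ δ γt r l1 lR lI : ℝ} (hI : 0 < lI)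
    (h1 : blackstockCubic κ δ γt r (l1 : ℂ) = 0)
    (h2 : blackstockCubic κ δ γt r ((lR : ℂ) + (lI : ℂ) * Complex.I) = 0) :
    l1 * (lR ^ 2 + lI ^ 2) = -(κ * r ^ 4) ∧
    2 * lR = -((δ + κ) * r ^ 2 + l1) ∧
    lR ^ 2 + lI ^ 2 = l1 ^ 2 + (δ + κ) * r ^ 2 * l1 + (1 + γt * r ^ 2) * r ^ 2 := by
  have hcubic : l1 ^ 3 + (δ + κ) * r ^ 2 * l1 ^ 2 + (1 + γt * r ^ 2) * r ^ 2 * l1 + κ * r ^ 4 = 0 := by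
    unfold blackstockCubic at h1
    exact_mod_cast h1
  set z : ℂ := (lR : ℂ) + (lI : ℂ) * Complex.I with hz
  have hne : z - (l1 : ℂ) ≠ 0 := by
    intro h
    have := congrArg Complex.im h
    simp [hz] at this
    exact hI.ne' this
  have h1c : (l1 : ℂ) ^ 3 + (δ + κ) * r ^ 2 * l1 ^ 2 + (1 + γt * r ^ 2) * r ^ 2 * l1 + κ * r ^ 4
      = 0 := by exact_mod_cast hcubic
  -- The quadratic factor of the cubic after division by `z - l1`.
  have hq : z ^ 2 + ((δ + κ) * r ^ 2 + l1) * z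
      + (l1 ^ 2 + (δ + κ) * r ^ 2 * l1 + (1 + γt * r ^ 2) * r ^ 2) = 0 := by
    apply mul_left_cancel₀ hne
    unfold blackstockCubic at h2
    push_cast at h2
    linear_combination h2 - h1c
  have hquad : (z ^ 2 + (((δ + κ) * r ^ 2 + l1 : ℝ) : ℂ) * z
      + ((l1 ^ 2 + (δ + κ) * r ^ 2 * l1 + (1 + γt * r ^ 2) * r ^ 2 : ℝ) : ℂ)) = 0 := by
    push_cast
    exact hq
  have hre := congrArg Complex.re hquad
  have him := congrArg Complex.im hquad
  simp only [hz, pow_two, Complex.add_re, Complex.add_im, Complex.mul_re, Complex.mul_im,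
    Complex.ofReal_re, Complex.ofReal_im, Complex.I_re, Complex.I_im, Complex.zero_re,
    Complex.zero_im] at hre him
  have hs : 2 * lR = -((δ + κ) * r ^ 2 + l1) := by
    apply mul_left_cancel₀ hI.ne'
    linear_combination him
  have hp : lR ^ 2 + lI ^ 2 = l1 ^ 2 + (δ + κ) * r ^ 2 * l1 + (1 + γt * r ^ 2) * r ^ 2 := by
    linear_combination lR * hs - hre
  refine ⟨?_, hs, hp⟩
  rw [hp]
  linear_combination hcubic

/-- Small-`r` expansion of the roots, with remainders bounded uniformly in `r`; the last
expansion is that of minus the denominator. -/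
lemma blackstock_roots_expansion (κ δ γt : ℝ) (hκ : 0 < κ) (hδ : 0 < δ) (hγt : 0 < γt) :
    ∃ ε M : ℝ, 0 < ε ∧ ε ≤ 1 ∧ 0 < M ∧ ∀ r : ℝ, 0 < r → r ≤ ε →
      ∀ l1 lR lI : ℝ, 0 < lI →
        blackstockCubic κ δ γt r (l1 : ℂ) = 0 →
        blackstockCubic κ δ γt r ((lR : ℂ) + (lI : ℂ) * Complex.I) = 0 →
        ∃ y u v k : ℝ, |y| ≤ M ∧ |u| ≤ M ∧ |v| ≤ M ∧ |k| ≤ M ∧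
          l1 = -κ * r ^ 2 + r ^ 4 * y ∧
          lR = -(δ / 2) * r ^ 2 - r ^ 4 * y / 2 ∧
          lI = r + r ^ 3 * u ∧
          u = (γt - κ * δ - δ ^ 2 / 4) / 2 + r ^ 2 * v ∧
          (lR - l1) ^ 2 + lI ^ 2 = r ^ 2 + r ^ 4 * k := by
  obtain ⟨A, hA⟩ : ∃ A, A = δ + κ := ⟨_, rfl⟩
  have hA0 : 0 < A := by rw [hA]; positivity
  obtain ⟨Y, hY⟩ : ∃ Y, Y = 2 * κ * ((2 * κ) ^ 2 + A * (2 * κ) + γt) := ⟨_, rfl⟩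
  have hY0 : 0 < Y := by rw [hY]; positivity
  obtain ⟨m, hm⟩ : ∃ m, m = γt - κ * δ - δ ^ 2 / 4 := ⟨_, rfl⟩
  obtain ⟨N, hN⟩ : ∃ N, N = Y * (2 * κ + A + δ / 2 + 2 * Y) := ⟨_, rfl⟩
  have hN0 : 0 < N := by rw [hN]; positivity
  obtain ⟨P, hP⟩ : ∃ P, P = |m| + N := ⟨_, rfl⟩
  have hP0 : 0 < P := by rw [hP]; positivity
  obtain ⟨K, hK⟩ : ∃ K, K = P + (δ / 2 + κ + 2 * Y) ^ 2 := ⟨_, rfl⟩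
  have hK0 : 0 < K := by rw [hK]; positivity
  refine ⟨min 1 (1 / A), Y + P + (N + P ^ 2) + K, by positivity, min_le_left _ _, by positivity, ?_⟩
  intro r hr hre l1 lR lI hI h1 h2
  obtain ⟨e1, e2, e3⟩ := blackstock_vieta hI h1 h2
  have hr1 : r ≤ 1 := hre.trans (min_le_left _ _)
  have hrA : A * r ≤ 1 := by
    have := hre.trans (min_le_right _ _)
    rw [le_div_iff₀ hA0] at this
    linarith
  rw [← hA] at e2 e3
  have hr2 : r ^ 2 ≤ 1 := by nlinarith
  have hr2p : 0 < r ^ 2 := by positivity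
  obtain ⟨x, hx⟩ : ∃ x, x = l1 / r ^ 2 := ⟨_, rfl⟩
  have hl1 : l1 = r ^ 2 * x := by rw [hx]; field_simp
  obtain ⟨w, hw⟩ : ∃ w, w = x ^ 2 + A * x + γt := ⟨_, rfl⟩
  have hnorm : lR ^ 2 + lI ^ 2 = r ^ 2 * (1 + r ^ 2 * w) := by
    rw [e3, hl1, hw]; ring
  have ex : x * (1 + r ^ 2 * w) = -κ := by
    have h4 : r ^ 4 ≠ 0 := by positivity
    apply mul_left_cancel₀ h4
    rw [hnorm, hl1] at e1
    linear_combination e1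
  -- `w ≥ -A²/4` and `(A r)² ≤ 1`.
  have hw1 : 1 / 2 ≤ 1 + r ^ 2 * w := by
    have hAr : (A * r) ^ 2 ≤ 1 := by nlinarith [mul_pos hA0 hr]
    have : 1 + r ^ 2 * w = 1 + r ^ 2 * (x + A / 2) ^ 2 + r ^ 2 * γt - (A * r) ^ 2 / 4 := by
      rw [hw]; ring
    rw [this]
    have : 0 ≤ r ^ 2 * (x + A / 2) ^ 2 := by positivity
    have : 0 ≤ r ^ 2 * γt := by positivity
    linarith
  have hxabs : |x| ≤ 2 * κ := by
    have : |x| * (1 + r ^ 2 * w) = κ := by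
      have h := congrArg abs ex
      rw [abs_mul, abs_neg, abs_of_pos hκ, abs_of_pos (by linarith : (0:ℝ) < 1 + r ^ 2 * w)] at h
      exact h
    have : |x| * (1 / 2) ≤ |x| * (1 + r ^ 2 * w) := by gcongr
    linarith
  have hwabs : |w| ≤ (2 * κ) ^ 2 + A * (2 * κ) + γt := by
    rw [hw]
    calc |x ^ 2 + A * x + γt| ≤ |x ^ 2| + |A * x| + |γt| := abs_add_three _ _ _
      _ = |x| ^ 2 + A * |x| + γt := by
        rw [abs_pow, abs_mul, abs_of_pos hA0, abs_of_pos hγt]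
      _ ≤ _ := by gcongr
  obtain ⟨y, hy⟩ : ∃ y, y = -(x * w) := ⟨_, rfl⟩
  have hyabs : |y| ≤ Y := by
    rw [hy, abs_neg, abs_mul, hY]
    gcongr
  have hxy : x = -κ + r ^ 2 * y := by rw [hy]; linear_combination ex
  have hlR : lR = -(δ / 2) * r ^ 2 - r ^ 4 * y / 2 := by
    rw [hl1, hxy, hA] at e2
    linear_combination e2 / 2
  obtain ⟨n, hn⟩ : ∃ n, n = y * (-(2 * κ) + A - δ / 2 + r ^ 2 * y + -(r ^ 2 * y / 4)) := ⟨_, rfl⟩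
  have hry : |r ^ 2 * y| ≤ Y := by
    rw [abs_mul, abs_of_pos hr2p]
    exact (mul_le_of_le_one_left (abs_nonneg _) hr2).trans hyabs
  have hnabs : |n| ≤ N := by
    rw [hn, abs_mul, hN]
    have := abs_le.mp hry
    gcongr
    rw [abs_le]
    constructor <;> linarith
  obtain ⟨p, hp⟩ : ∃ p, p = m + r ^ 2 * n := ⟨_, rfl⟩
  have hrn : |r ^ 2 * n| ≤ N := by
    rw [abs_mul, abs_of_pos hr2p]
    exact (mul_le_of_le_one_left (abs_nonneg _) hr2).trans hnabs
  have hpabs : |p| ≤ P := by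
    rw [hp, hP]
    exact (abs_add_le _ _).trans (by linarith)
  have hlI2 : lI ^ 2 = r ^ 2 + r ^ 4 * p := by
    rw [hw, hxy, hlR] at hnorm
    rw [hp, hm, hn]
    rw [hA] at hnorm ⊢
    linear_combination hnorm
  obtain ⟨u, hu⟩ : ∃ u, u = (lI - r) / r ^ 3 := ⟨_, rfl⟩
  have hlI : lI = r + r ^ 3 * u := by rw [hu]; field_simp; ring
  have hu2 : 2 * u + r ^ 2 * u ^ 2 = p := by
    have h4 : r ^ 4 ≠ 0 := by positivity
    apply mul_left_cancel₀ h4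
    rw [hlI] at hlI2
    linear_combination hlI2
  have hupos : 0 < 1 + r ^ 2 * u := by
    have : 0 < r * (1 + r ^ 2 * u) := by
      have h := hI
      rw [hlI] at h
      linarith
    exact pos_of_mul_pos_right this hr.le
  -- `p = u (2 + r² u)` with second factor at least `1`, since `lI > 0`.
  have huabs : |u| ≤ P := by
    have h : |u| * (2 + r ^ 2 * u) = |p| := by
      rw [← hu2, ← abs_of_pos (by linarith : (0:ℝ) < 2 + r ^ 2 * u), ← abs_mul]
      congr 1
      ring
    have : |u| * 1 ≤ |u| * (2 + r ^ 2 * u) := by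
      gcongr
      linarith
    linarith
  have hu2abs : u ^ 2 ≤ P ^ 2 := by
    rw [← sq_abs]
    gcongr
  refine ⟨y, u, (n - u ^ 2) / 2, p + ((κ - δ / 2) - 3 / 2 * (r ^ 2 * y)) ^ 2, ?_, ?_, ?_, ?_, ?_,
    hlR, hlI, ?_, ?_⟩
  · have : 0 ≤ P ^ 2 := sq_nonneg P
    linarith
  · have : 0 ≤ P ^ 2 := sq_nonneg P
    linarith
  · have := abs_le.mp hnabs
    have := sq_nonneg u
    have : 0 ≤ P ^ 2 := sq_nonneg P
    rw [abs_le]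
    constructor <;> linarith
  · have h1 : |(κ - δ / 2) - 3 / 2 * (r ^ 2 * y)| ≤ δ / 2 + κ + 2 * Y := by
      have := abs_le.mp hry
      rw [abs_le]
      constructor <;> linarith
    have h2 : ((κ - δ / 2) - 3 / 2 * (r ^ 2 * y)) ^ 2 ≤ (δ / 2 + κ + 2 * Y) ^ 2 := by
      rw [← sq_abs]
      gcongr
    have := abs_le.mp hpabs
    have h3 := sq_nonneg ((κ - δ / 2) - 3 / 2 * (r ^ 2 * y))
    have : 0 ≤ P ^ 2 := sq_nonneg P
    rw [abs_le]
    constructor <;> linarith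
  · rw [hl1, hxy]; ring
  · linear_combination hu2 / 2 + hp / 2 + hm / 2
  · rw [hlI2, hlR, hl1, hxy]; ring

lemma abs_exp_sub_exp_le_mul {a b c : ℝ} (ha : a ≤ c) (hb : b ≤ c) :
    |Real.exp a - Real.exp b| ≤ |a - b| * Real.exp c := by
  have key : ∀ a b : ℝ, a ≤ c → Real.exp a - Real.exp b ≤ |a - b| * Real.exp c := by
    intro a b ha
    have h1 : Real.exp b = Real.exp a * Real.exp (b - a) := by
      rw [← Real.exp_add]; congr 1; ring
    have h2 := Real.add_one_le_exp (b - a)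
    have h3 : Real.exp a ≤ Real.exp c := Real.exp_le_exp.mpr ha
    have h4 := Real.exp_pos a
    calc Real.exp a - Real.exp b = Real.exp a * (1 - Real.exp (b - a)) := by rw [h1]; ring
      _ ≤ Real.exp a * |a - b| := by
        gcongr
        linarith [le_abs_self (a - b)]
      _ ≤ Real.exp c * |a - b| := by gcongr
      _ = _ := mul_comm _ _
  rw [abs_le]
  constructor
  · have := key b a hb
    rw [abs_sub_comm] at this
    linarith
  · exact key a b ha

lemma abs_cos_add_sub_le (x h : ℝ) :
    |Real.cos (x + h) - Real.cos x + h * Real.sin x| ≤ 2 * h ^ 2 := by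
  have hc : |Real.cos h - 1| ≤ h ^ 2 := by
    have := Real.one_sub_sq_div_two_le_cos (x := h)
    have := Real.cos_le_one h
    rw [abs_le]
    constructor <;> nlinarith [sq_nonneg h]
  -- The cubic bound serves small `h`, the trivial bound `|h| + 1` large `h`.
  have hs : |h - Real.sin h| ≤ h ^ 2 := by
    have h1 := Real.abs_sub_sin_le h
    have h2 : |h - Real.sin h| ≤ |h| + 1 :=
      (abs_sub _ _).trans (by linarith [Real.abs_sin_le_one h])
    have h0 := abs_nonneg h
    rw [← sq_abs]
    rcases le_total |h| 6 with h6 | h6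
    · have : |h| ^ 3 / 6 ≤ |h| ^ 2 := by nlinarith [sq_nonneg |h|]
      linarith
    · nlinarith
  have e : Real.cos (x + h) - Real.cos x + h * Real.sin x
      = Real.cos x * (Real.cos h - 1) + Real.sin x * (h - Real.sin h) := by
    rw [Real.cos_add]; ring
  rw [e]
  calc _ ≤ |Real.cos x| * |Real.cos h - 1| + |Real.sin x| * |h - Real.sin h| := by
        rw [← abs_mul, ← abs_mul]; exact abs_add_le _ _
    _ ≤ 1 * h ^ 2 + 1 * h ^ 2 := by
        gcongr
        · exact Real.abs_cos_le_one x
        · exact Real.abs_sin_le_one x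
    _ = _ := by ring

/-- Half of the exponential decay absorbs a quadratic polynomial in `s`. -/
lemma quadratic_mul_exp_le {κ s M : ℝ} (hκ : 0 < κ) (hs : 0 ≤ s) (hM : 0 < M) :
    (4 * M + 3 * M * s + 2 * M ^ 2 * s ^ 2) * Real.exp (-(κ / 2) * s)
      ≤ (4 * M + 12 * M / κ + 64 * M ^ 2 / κ ^ 2) * Real.exp (-(κ / 4) * s) := by
  have h := Real.quadratic_le_exp_of_nonneg (x := κ / 4 * s) (by positivity)
  have h0 : 0 ≤ κ / 4 * s := by positivity
  set E := Real.exp (κ / 4 * s) with hE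
  have h1 : s ≤ 4 / κ * E := by
    have : s = 4 / κ * (κ / 4 * s) := by field_simp
    rw [this]
    gcongr
    nlinarith [sq_nonneg (κ / 4 * s)]
  have h2 : s ^ 2 ≤ 32 / κ ^ 2 * E := by
    have : s ^ 2 = 32 / κ ^ 2 * ((κ / 4 * s) ^ 2 / 2) := by ring_nf; field_simp
    rw [this]
    gcongr
    linarith
  have h3 : 1 ≤ E := by nlinarith [sq_nonneg (κ / 4 * s)]
  have h4 : Real.exp (-(κ / 4) * s) = E * Real.exp (-(κ / 2) * s) := by
    rw [hE, ← Real.exp_add]; congr 1; ring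
  rw [h4, ← mul_assoc]
  gcongr
  calc 4 * M + 3 * M * s + 2 * M ^ 2 * s ^ 2
      ≤ 4 * M * E + 3 * M * (4 / κ * E) + 2 * M ^ 2 * (32 / κ ^ 2 * E) := by
        have : 4 * M * 1 ≤ 4 * M * E := by gcongr
        rw [mul_one] at this
        gcongr ?_ + 3 * M * ?_ + 2 * M ^ 2 * ?_
    _ = _ := by ring

theorem blackstock_J0_second_order_symbol_approximation
    (κ δ γt : ℝ) (hκ : 0 < κ) (hδ : 0 < δ) (hγt : 0 < γt) (hκδ : 2 * κ < δ) :
    ∃ ε₀ C c : ℝ, 0 < ε₀ ∧ 0 < C ∧ 0 < c ∧ ∀ r : ℝ, 0 < r → r ≤ ε₀ →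
      ∀ l1 lR lI : ℝ, 0 < lI →
        blackstockCubic κ δ γt r (l1 : ℂ) = 0 →
        blackstockCubic κ δ γt r ((lR : ℂ) + (lI : ℂ) * Complex.I) = 0 →
        ∀ t : ℝ, 0 ≤ t →
          |(Real.cos (lI * t) * Real.exp (lR * t) - Real.exp (l1 * t)) /
              (2 * lR * l1 - lI ^ 2 - lR ^ 2 - l1 ^ 2)
            - Ghat0 κ δ t r - Hhat0 κ δ γt t r|
            ≤ C * Real.exp (-c * r ^ 2 * t) := by
  obtain ⟨ε, M, hε, hε1, hM, hroots⟩ := blackstock_roots_expansion κ δ γt hκ hδ hγt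
  -- Beyond `r ≤ ε`, the threshold ensures `M r² ≤ κ / 2` and `M r² ≤ 1 / 2`.
  refine ⟨min ε (min (κ / (2 * M)) (1 / (2 * M))), 4 * M + 12 * M / κ + 64 * M ^ 2 / κ ^ 2, κ / 4,
    by positivity, by positivity, by positivity, ?_⟩
  intro r hr hre l1 lR lI hI h1 h2 t ht
  obtain ⟨y, u, v, k, hy, hu, hv, hk, el1, elR, elI, eu, eS⟩ :=
    hroots r hr (hre.trans (min_le_left _ _)) l1 lR lI hI h1 h2
  have hr1 : r ≤ 1 := (hre.trans (min_le_left _ _)).trans hε1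
  have hr2p : 0 < r ^ 2 := by positivity
  have hr21 : r ^ 2 ≤ r := by nlinarith
  have hMκ : M * r ^ 2 ≤ κ / 2 := by
    have := hre.trans ((min_le_right _ _).trans (min_le_left _ _))
    rw [le_div_iff₀ (by positivity)] at this
    have : M * r ^ 2 ≤ M * r := by gcongr
    linarith
  have hM1 : M * r ^ 2 ≤ 1 / 2 := by
    have := hre.trans ((min_le_right _ _).trans (min_le_right _ _))
    rw [le_div_iff₀ (by positivity)] at this
    have : M * r ^ 2 ≤ M * r := by gcongr
    linarith
  have hb : ∀ a : ℝ, |a| ≤ M → |r ^ 2 * a| ≤ M * r ^ 2 := by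
    intro a ha
    rw [abs_mul, abs_of_pos hr2p, mul_comm]
    gcongr
  have hyr := abs_le.mp (hb y hy)
  have hkr := abs_le.mp (hb k hk)
  obtain ⟨s, hs⟩ : ∃ s, s = r ^ 2 * t := ⟨_, rfl⟩
  have hs0 : 0 ≤ s := by rw [hs]; positivity
  obtain ⟨S, hS⟩ : ∃ S, S = (lR - l1) ^ 2 + lI ^ 2 := ⟨_, rfl⟩
  have hS2 : S = r ^ 2 * (1 + r ^ 2 * k) := by rw [hS, eS]; ring
  have hSlow : r ^ 2 / 2 ≤ S := by
    have : r ^ 2 * (1 / 2) ≤ r ^ 2 * (1 + r ^ 2 * k) := by gcongr; linarith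
    linarith
  have hSpos : 0 < S := by linarith
  -- All four exponents are at most `-(κ/2) s`.
  have el1t : l1 * t = (-κ + r ^ 2 * y) * s := by rw [el1, hs]; ring
  have elRt : lR * t = (-(δ / 2) - r ^ 2 * y / 2) * s := by rw [elR, hs]; ring
  have b1 : l1 * t ≤ -(κ / 2) * s := by
    rw [el1t]; gcongr; linarith
  have b2 : lR * t ≤ -(κ / 2) * s := by
    rw [elRt]; gcongr; linarith
  have b3 : -κ * r ^ 2 * t ≤ -(κ / 2) * s := by
    rw [mul_assoc, ← hs]; gcongr; linarith
  have b4 : -(δ / 2) * r ^ 2 * t ≤ -(κ / 2) * s := by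
    rw [mul_assoc, ← hs]; gcongr; linarith
  obtain ⟨X, hX⟩ : ∃ X, X = Real.exp (-(κ / 2) * s) := ⟨_, rfl⟩
  have hX0 : 0 < X := hX ▸ Real.exp_pos _
  have d1 : |Real.exp (l1 * t) - Real.exp (-κ * r ^ 2 * t)| ≤ M * r ^ 2 * s * X := by
    refine (abs_exp_sub_exp_le_mul b1 b3).trans ?_
    have : l1 * t - -κ * r ^ 2 * t = r ^ 2 * y * s := by rw [el1t, hs]; ring
    rw [this, ← hX, abs_mul, abs_of_nonneg hs0]
    gcongr
    exact hb y hy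
  have d2 : |Real.exp (lR * t) - Real.exp (-(δ / 2) * r ^ 2 * t)| ≤ M * r ^ 2 * s * X := by
    refine (abs_exp_sub_exp_le_mul b2 b4).trans ?_
    have : lR * t - -(δ / 2) * r ^ 2 * t = -(r ^ 2 * y * (s / 2)) := by rw [elRt, hs]; ring
    rw [this, ← hX, abs_neg, abs_mul, abs_of_nonneg (by positivity : 0 ≤ s / 2)]
    gcongr
    · exact hb y hy
    · linarith
  have d3 := abs_cos_add_sub_le (r * t) (r ^ 3 * u * t)
  rw [show r * t + r ^ 3 * u * t = lI * t by rw [elI]; ring] at d3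
  have x1 : Real.exp (l1 * t) ≤ X := hX ▸ Real.exp_le_exp.mpr b1
  have x2 : Real.exp (lR * t) ≤ X := hX ▸ Real.exp_le_exp.mpr b2
  have x4 : Real.exp (-(δ / 2) * r ^ 2 * t) ≤ X := hX ▸ Real.exp_le_exp.mpr b4
  have p1 := Real.exp_pos (l1 * t)
  have p2 := Real.exp_pos (lR * t)
  have p4 := Real.exp_pos (-(δ / 2) * r ^ 2 * t)
  have c1 := Real.abs_cos_le_one (lI * t)
  have s1 := Real.abs_sin_le_one (r * t)
  rw [show 2 * lR * l1 - lI ^ 2 - lR ^ 2 - l1 ^ 2 = -S by rw [hS]; ring]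
  unfold Ghat0 Hhat0
  rw [show (4 * (κ * γt - κ ^ 2 * δ) - κ * δ ^ 2) / (8 * κ) = (γt - κ * δ - δ ^ 2 / 4) / 2 by
    field_simp; ring]
  rw [show (γt - κ * δ - δ ^ 2 / 4) / 2 = u - r ^ 2 * v by linarith]
  rw [show -(κ / 4) * r ^ 2 * t = -(κ / 4) * s by rw [hs]; ring]
  refine le_trans ?_ (quadratic_mul_exp_le hκ hs0 hM)
  rw [← hX]
  generalize Real.exp (l1 * t) = a at *
  generalize Real.exp (lR * t) = b at *
  generalize Real.exp (-κ * r ^ 2 * t) = E1 at *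
  generalize Real.exp (-(δ / 2) * r ^ 2 * t) = E2 at *
  generalize Real.cos (lI * t) = cI at *
  generalize Real.cos (r * t) = c0 at *
  generalize Real.sin (r * t) = s0 at *
  -- Successive replacement of the denominator, the two exponentials and the cosine.
  have split : (cI * b - a) / -S - (E1 - c0 * E2) / r ^ 2 - (u - r ^ 2 * v) * r * t * s0 * E2
      = (cI * b - a) * (r ^ 2 * k / S) + (a - E1) / r ^ 2 + -(cI * ((b - E2) / r ^ 2))
        + -(E2 * ((cI - c0 + r ^ 3 * u * t * s0) / r ^ 2)) + E2 * (s0 * (r ^ 2 * v * (r * t))) := by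
    have hrk : r ^ 2 * k = (S - r ^ 2) / r ^ 2 := by rw [hS2]; field_simp; ring
    rw [hrk]
    field_simp
    ring
  rw [split]
  have t1 : |(cI * b - a) * (r ^ 2 * k / S)| ≤ (2 * X) * (2 * M) := by
    rw [abs_mul]
    gcongr
    · calc |cI * b - a| ≤ |cI * b| + |a| := abs_sub _ _
        _ = |cI| * b + a := by rw [abs_mul, abs_of_pos p1, abs_of_pos p2]
        _ ≤ 1 * X + X := by gcongr
        _ = 2 * X := by ring
    · rw [abs_div, abs_of_pos hSpos, div_le_iff₀ hSpos]
      have := hb k hk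
      have : M * r ^ 2 ≤ M * (2 * S) := by gcongr; linarith
      linarith
  have t2 : |(a - E1) / r ^ 2| ≤ M * s * X := by
    rw [abs_div, abs_of_pos hr2p, div_le_iff₀ hr2p]
    linarith
  have t3 : |-(cI * ((b - E2) / r ^ 2))| ≤ M * s * X := by
    rw [abs_neg, abs_mul]
    have : |(b - E2) / r ^ 2| ≤ M * s * X := by
      rw [abs_div, abs_of_pos hr2p, div_le_iff₀ hr2p]
      linarith
    exact (mul_le_of_le_one_left (abs_nonneg _) c1).trans this
  have t4 : |-(E2 * ((cI - c0 + r ^ 3 * u * t * s0) / r ^ 2))| ≤ X * (2 * M ^ 2 * s ^ 2) := by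
    rw [abs_neg, abs_mul, abs_of_pos p4]
    gcongr
    rw [abs_div, abs_of_pos hr2p, div_le_iff₀ hr2p]
    refine d3.trans ?_
    have : u ^ 2 ≤ M ^ 2 := by
      rw [← sq_abs]
      gcongr
    calc 2 * (r ^ 3 * u * t) ^ 2 = 2 * u ^ 2 * s ^ 2 * r ^ 2 := by rw [hs]; ring
      _ ≤ _ := by gcongr
  have t5 : |E2 * (s0 * (r ^ 2 * v * (r * t)))| ≤ X * (1 * (M * s)) := by
    rw [abs_mul, abs_mul, abs_of_pos p4]
    gcongr
    have : r ^ 2 * v * (r * t) = r * (v * s) := by rw [hs]; ring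
    rw [this, abs_mul, abs_mul, abs_of_pos hr, abs_of_nonneg hs0]
    have : |v| * s ≤ M * s := by gcongr
    have h := mul_le_of_le_one_left (mul_nonneg (abs_nonneg v) hs0) hr1
    linarith
  refine (abs_add_le _ _).trans ?_
  refine (add_le_add_left ((abs_add_le _ _).trans
    (add_le_add_left ((abs_add_three _ _ _)) _)) _).trans ?_
  linarith


end
end

section
/- Let n ≥ 1, c > 0 and ε₀ > 0. Then there exist constants C₁, C₂, T > 0 (with T ≥ 2) such that for every t ≥ T: C₁ 𝒟ₙ^{(1)}(t) ≤ ( ∫_{{ξ ∈ ℝⁿ : |ξ| ≤ ε₀}} |ξ|^{-2} sin²(|ξ| t) e^{-2c|ξ|² t} dξ )^{1/2} ≤ C₂ 𝒟ₙ^{(1)}(t). -/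
/-!
In polar coordinates the squared norm is a positive constant times
`J(t) = ∫₀^ε r^(n-1) sin²(rt) e^{-2cr²t} / r² dr`, so it suffices to show that `J(t)` is comparable
to the square of the rate, namely `t`, `log t` and `t^(1-n/2)` for `n = 1`, `n = 2` and `n ≥ 3`.

*Upper bounds.* From `sin² x ≤ min(1, x²)` one gets `sin²(rt) / r² ≤ 2t² / (1 + (tr)²)`, whose
integral against `1` (`n = 1`) is an arctangent of size `t`, and against `r` (`n = 2`) is
`log (1 + (tε)²)`. For `n ≥ 3` the sine is bounded by `1` and the remaining integral is a Gamma
integral which scales like `t^(1-n/2)`.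

*Lower bounds.* All three cases rest on `∫_A^B sin²(rt)/r dr ≥ ½ log (B / (A + π/(2t)))`
(`sine_log_lower`): shifting by a quarter period turns `sin²` into `cos²`, and since `1/r` is
decreasing the two integrands add up to at least `1/(r + π/(2t))`. It is applied on the window
where the mass of the integral sits: `[1/t, 10/t]` for `n = 1`, `[1/t, 1/√t]` for `n = 2` and
`[1/√t, 6/√t]` for `n ≥ 3`. On these windows the Gaussian factor is bounded below
and the power `r^(n-2)` is controlled by its value at one of the endpoints.
-/

/-!
STATEMENT 16. Optimal two-sided estimate of the `L²` norm of the multiplier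
`ξ ↦ |ξ|⁻¹|sin(|ξ|t)|e^{-c|ξ|²t}` restricted to the ball `{|ξ| ≤ ε₀}` in `ℝⁿ`:
it behaves exactly like `𝒟ₙ⁽¹⁾(t)` for large `t`.
-/

open MeasureTheory

noncomputable section

/-- The rate `𝒟ₙ⁽¹⁾(t)`. -/
def D1rate (n : ℕ) (t : ℝ) : ℝ :=
  if n = 1 then t ^ ((1 : ℝ) / 2)
  else if n = 2 then Real.log t ^ ((1 : ℝ) / 2)
  else t ^ ((1 : ℝ) / 2 - (n : ℝ) / 4)

/-! ### Reduction to a radial integral -/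

/-- The radial density of the squared multiplier in dimension `n`, including the Jacobian
`r ^ (n - 1)`. -/
def radialDensity (n : ℕ) (c t r : ℝ) : ℝ :=
  r ^ (n - 1) * (Real.sin (r * t) ^ 2 * Real.exp (-2 * c * r ^ 2 * t) / r ^ 2)

lemma radialDensity_nonneg (n : ℕ) (c t : ℝ) {r : ℝ} (hr : 0 ≤ r) :
    0 ≤ radialDensity n c t r := by
  unfold radialDensity; positivity

lemma setIntegral_closedBall_radial (n : ℕ) (hn : 1 ≤ n) (ε : ℝ) (hε : 0 < ε) (f : ℝ → ℝ) :
    ∫ ξ in Metric.closedBall (0 : EuclideanSpace ℝ (Fin n)) ε, f ‖ξ‖ =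
      (n * (volume : Measure (EuclideanSpace ℝ (Fin n))).real (Metric.ball 0 1)) *
        ∫ r in (0 : ℝ)..ε, r ^ (n - 1) * f r := by
  have : Nonempty (Fin n) := ⟨⟨0, hn⟩⟩
  have h := integral_fun_norm_addHaar (volume : Measure (EuclideanSpace ℝ (Fin n)))
    ((Set.Iic ε).indicator f)
  rw [← integral_indicator Metric.isClosed_closedBall.measurableSet]
  have h1 : (Metric.closedBall (0 : EuclideanSpace ℝ (Fin n)) ε).indicator (fun ξ => f ‖ξ‖)
      = fun ξ => (Set.Iic ε).indicator f ‖ξ‖ := by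
    ext ξ; simp [Set.indicator]
  have h2 : (fun y : ℝ => y ^ (n - 1) • (Set.Iic ε).indicator f y)
      = (Set.Iic ε).indicator (fun y => y ^ (n - 1) * f y) := by
    ext y; by_cases hy : y ≤ ε <;> simp [Set.indicator, hy]
  rw [h1, h, finrank_euclideanSpace, Fintype.card_fin, h2,
    setIntegral_indicator measurableSet_Iic, Set.Ioi_inter_Iic,
    intervalIntegral.integral_of_le hε.le]
  simp [mul_assoc]

/-! ### Upper bounds for the radial integral -/

lemma sin_sq_div_sq_le (t r : ℝ) :
    Real.sin (r * t) ^ 2 / r ^ 2 ≤ 2 * t ^ 2 / (1 + (t * r) ^ 2) := by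
  rcases eq_or_ne r 0 with rfl | hr
  · simp; positivity
  have h1 := Real.sin_sq_le_one (r * t)
  have h2 : Real.sin (r * t) ^ 2 ≤ (r * t) ^ 2 := Real.sin_sq_le_sq
  rw [div_le_div_iff₀ (by positivity) (by positivity)]
  nlinarith [mul_le_mul_of_nonneg_right h1 (sq_nonneg (t * r))]

lemma exp_factor_le_one {c t : ℝ} (hc : 0 < c) (ht : 0 < t) (r : ℝ) :
    Real.exp (-2 * c * r ^ 2 * t) ≤ 1 := by
  apply Real.exp_le_one_iff.2
  have : 0 ≤ c * r ^ 2 * t := by positivity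
  linarith

lemma radialDensity_le (n : ℕ) {c t r : ℝ} (hc : 0 < c) (ht : 0 < t) (hr : 0 ≤ r) :
    radialDensity n c t r ≤ r ^ (n - 1) * (2 * t ^ 2 / (1 + (t * r) ^ 2)) := by
  unfold radialDensity
  refine mul_le_mul_of_nonneg_left (le_trans ?_ (sin_sq_div_sq_le t r)) (by positivity)
  gcongr
  exact mul_le_of_le_one_right (sq_nonneg _) (exp_factor_le_one hc ht r)

lemma continuous_majorant (n : ℕ) (t : ℝ) :
    Continuous fun r : ℝ => r ^ (n - 1) * (2 * t ^ 2 / (1 + (t * r) ^ 2)) := by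
  have : ∀ r : ℝ, 1 + (t * r) ^ 2 ≠ 0 := fun r => by positivity
  fun_prop (disch := exact this _)

lemma radialDensity_intervalIntegrable (n : ℕ) {c t ε : ℝ} (hc : 0 < c) (ht : 0 < t)
    (hε : 0 < ε) : IntervalIntegrable (radialDensity n c t) volume 0 ε := by
  refine ((continuous_majorant n t).intervalIntegrable 0 ε).mono_fun' ?_ ?_
  · refine Measurable.aestronglyMeasurable ?_
    unfold radialDensity
    fun_prop
  · refine (ae_restrict_iff' measurableSet_uIoc).2 (.of_forall fun r hr => ?_)
    rw [Set.uIoc_of_le hε.le] at hr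
    simp only
    rw [Real.norm_of_nonneg (radialDensity_nonneg n c t hr.1.le)]
    exact radialDensity_le n hc ht hr.1.le

lemma radial_upper (n : ℕ) {c t ε : ℝ} (hc : 0 < c) (ht : 0 < t) (hε : 0 < ε) :
    ∫ r in (0 : ℝ)..ε, radialDensity n c t r ≤
      ∫ r in (0 : ℝ)..ε, r ^ (n - 1) * (2 * t ^ 2 / (1 + (t * r) ^ 2)) :=
  intervalIntegral.integral_mono_on hε.le (radialDensity_intervalIntegrable n hc ht hε)
    ((continuous_majorant n t).intervalIntegrable 0 ε)
    fun _ hr => radialDensity_le n hc ht hr.1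

lemma radial_upper_one {c t ε : ℝ} (hc : 0 < c) (ht : 0 < t) (hε : 0 < ε) :
    ∫ r in (0 : ℝ)..ε, radialDensity 1 c t r ≤ Real.pi * t := by
  refine (radial_upper 1 hc ht hε).trans ?_
  have hd : ∀ r ∈ Set.uIcc 0 ε, HasDerivAt (fun r : ℝ => 2 * t * Real.arctan (t * r))
      (r ^ (1 - 1) * (2 * t ^ 2 / (1 + (t * r) ^ 2))) r := fun r _ => by
    have h := (((hasDerivAt_id r).const_mul t).arctan).const_mul (2 * t)
    refine h.congr_deriv ?_
    simp only [id]
    have : 1 + (t * r) ^ 2 ≠ 0 := by positivity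
    field_simp
    simp
  rw [intervalIntegral.integral_eq_sub_of_hasDerivAt hd
    ((continuous_majorant 1 t).intervalIntegrable 0 ε)]
  have := (Real.arctan_lt_pi_div_two (t * ε)).le
  simp only [mul_zero, Real.arctan_zero, sub_zero]
  nlinarith

lemma radial_upper_two {c t ε : ℝ} (hc : 0 < c) (ht : 0 < t) (hε : 0 < ε) :
    ∫ r in (0 : ℝ)..ε, radialDensity 2 c t r ≤ Real.log (1 + (t * ε) ^ 2) := by
  refine (radial_upper 2 hc ht hε).trans ?_
  have hd : ∀ r ∈ Set.uIcc 0 ε, HasDerivAt (fun r : ℝ => Real.log (1 + (t * r) ^ 2))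
      (r ^ (2 - 1) * (2 * t ^ 2 / (1 + (t * r) ^ 2))) r := fun r _ => by
    have hne : 1 + (t * r) ^ 2 ≠ 0 := by positivity
    have h := ((((hasDerivAt_id r).const_mul t).pow 2).const_add 1).log hne
    refine h.congr_deriv ?_
    simp only [id, Pi.pow_apply]
    field_simp
    simp only [Nat.add_one_sub_one, pow_one, Nat.cast_ofNat]
    ring
  rw [intervalIntegral.integral_eq_sub_of_hasDerivAt hd
    ((continuous_majorant 2 t).intervalIntegrable 0 ε)]
  simp

lemma radial_upper_large (n : ℕ) (hn : 3 ≤ n) {c : ℝ} (hc : 0 < c) :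
    ∃ b : ℝ, 0 < b ∧ ∀ t ε : ℝ, 0 < t → 0 < ε →
      ∫ r in (0 : ℝ)..ε, radialDensity n c t r ≤ b * t ^ (1 - (n : ℝ) / 2) := by
  have hn' : (3 : ℝ) ≤ n := by exact_mod_cast hn
  refine ⟨(2 * c) ^ (1 - (n : ℝ) / 2) * (1 / 2) * Real.Gamma (((n : ℝ) - 3 + 1) / 2),
    mul_pos (by positivity) (Real.Gamma_pos_of_pos (by linarith)), fun t ε ht hε => ?_⟩
  have hq : (-1 : ℝ) < (n : ℝ) - 3 := by linarith
  have hb : 0 < 2 * c * t := by positivity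
  have hG := integral_rpow_mul_exp_neg_mul_rpow two_pos hq hb
  have hI : IntegrableOn (fun x : ℝ => x ^ ((n : ℝ) - 3) * Real.exp (-(2 * c * t) * x ^ (2 : ℝ)))
      (Set.Ioi 0) := integrableOn_rpow_mul_exp_neg_mul_rpow hq two_pos hb
  have hexp : -((n : ℝ) - 3 + 1) / 2 = 1 - (n : ℝ) / 2 := by ring
  rw [hexp, Real.mul_rpow (by positivity) ht.le] at hG
  have hle : ∫ r in (0 : ℝ)..ε, radialDensity n c t r ≤
      ∫ x in Set.Ioi (0 : ℝ), x ^ ((n : ℝ) - 3) * Real.exp (-(2 * c * t) * x ^ (2 : ℝ)) := by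
    rw [intervalIntegral.integral_of_le hε.le]
    refine le_trans (setIntegral_mono_on
      ((intervalIntegrable_iff_integrableOn_Ioc_of_le hε.le).1
        (radialDensity_intervalIntegrable n hc ht hε))
      (hI.mono_set Set.Ioc_subset_Ioi_self) measurableSet_Ioc fun r hr => ?_)
      (setIntegral_mono_set hI ?_ (Set.Ioc_subset_Ioi_self.eventuallyLE))
    · have hr0 : 0 < r := hr.1
      have hp : r ^ ((n : ℝ) - 3) = r ^ (n - 1) / r ^ 2 := by
        obtain ⟨k, rfl⟩ := Nat.exists_eq_add_of_le hn
        have : ((3 + k : ℕ) : ℝ) - 3 = (k : ℝ) := by push_cast; ring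
        rw [this, Real.rpow_natCast, show 3 + k - 1 = k + 2 by omega, pow_add]
        field_simp
      rw [hp, Real.rpow_two, show -(2 * c * t) * r ^ 2 = -2 * c * r ^ 2 * t by ring]
      unfold radialDensity
      rw [mul_div_assoc', div_mul_eq_mul_div]
      gcongr
      exact mul_le_of_le_one_left (Real.exp_pos _).le (Real.sin_sq_le_one _)
    · refine (ae_restrict_iff' measurableSet_Ioi).2 (.of_forall fun r hr => ?_)
      have : (0 : ℝ) < r := hr
      simp only [Pi.zero_apply]
      positivity
  refine hle.trans (le_of_eq ?_)
  rw [hG]; ring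

/-! ### Lower bounds for the radial integral -/

/-- The oscillating factor `sin²` costs at most a factor `2` and a shift of the lower endpoint by
a quarter period: average `sin²` with its shift `cos²` and use that `1 / r` is decreasing. -/
lemma sine_log_lower {A B t : ℝ} (hA : 0 < A) (ht : 0 < t)
    (hAB : A + Real.pi / (2 * t) ≤ B) :
    1 / 2 * Real.log (B / (A + Real.pi / (2 * t))) ≤
      ∫ r in A..B, Real.sin (r * t) ^ 2 / r := by
  set h := Real.pi / (2 * t) with hh
  have hpos : 0 < h := by positivity
  have hB : 0 < B := by linarith
  have hint : ∀ a b : ℝ, 0 < a → a ≤ b →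
      IntervalIntegrable (fun r => Real.sin (r * t) ^ 2 / r) volume a b := fun a b ha hab => by
    apply ContinuousOn.intervalIntegrable_of_Icc hab
    refine ContinuousOn.div (by fun_prop) (by fun_prop) fun r hr => ?_
    linarith [hr.1]
  have hnn : ∀ r : ℝ, 0 < r → 0 ≤ Real.sin (r * t) ^ 2 / r := fun r hr => by positivity
  have h1 : ∫ r in (A + h)..B, Real.sin (r * t) ^ 2 / r ≤
      ∫ r in A..B, Real.sin (r * t) ^ 2 / r := by
    rw [← intervalIntegral.integral_add_adjacent_intervals (hint A (A + h) hA (by linarith))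
      (hint (A + h) B (by linarith) hAB)]
    have := intervalIntegral.integral_nonneg (μ := volume) (a := A) (b := A + h) (by linarith)
      fun r hr => hnn r (by linarith [hr.1])
    linarith
  have h2 : ∫ r in A..(B - h), Real.sin (r * t) ^ 2 / r ≤
      ∫ r in A..B, Real.sin (r * t) ^ 2 / r := by
    rw [← intervalIntegral.integral_add_adjacent_intervals (hint A (B - h) hA (by linarith))
      (hint (B - h) B (by linarith) (by linarith))]
    have := intervalIntegral.integral_nonneg (μ := volume) (a := B - h) (b := B) (by linarith)
      fun r hr => hnn r (by linarith [hr.1])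
    linarith
  have h3 : ∫ r in (A + h)..B, Real.sin (r * t) ^ 2 / r =
      ∫ r in A..(B - h), Real.cos (r * t) ^ 2 / (r + h) := by
    have := intervalIntegral.integral_comp_add_right (a := A) (b := B - h)
      (fun r => Real.sin (r * t) ^ 2 / r) h
    rw [sub_add_cancel] at this
    rw [← this]
    congr 1
    ext r
    have : (r + h) * t = r * t + Real.pi / 2 := by rw [hh]; field_simp
    rw [this, Real.sin_add_pi_div_two]
  have hcont : ∀ f : ℝ → ℝ, Continuous f →
      IntervalIntegrable (fun r => f r / (r + h)) volume A (B - h) := fun f hf => by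
    apply ContinuousOn.intervalIntegrable_of_Icc (by linarith)
    refine ContinuousOn.div (by fun_prop) (by fun_prop) fun r hr => ?_
    linarith [hr.1]
  have hc2 := hcont (fun r => Real.cos (r * t) ^ 2) (by fun_prop)
  have hc1 := hcont (fun _ => 1) (by fun_prop)
  have h4 : ∫ r in A..(B - h), 1 / (r + h) = Real.log (B / (A + h)) := by
    have := intervalIntegral.integral_comp_add_right (a := A) (b := B - h)
      (fun r : ℝ => 1 / r) h
    rw [this, sub_add_cancel, integral_one_div_of_pos (by linarith) hB]
  have h5 : ∫ r in A..(B - h), 1 / (r + h) ≤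
      ∫ r in A..(B - h), (Real.sin (r * t) ^ 2 / r + Real.cos (r * t) ^ 2 / (r + h)) := by
    refine intervalIntegral.integral_mono_on (by linarith) hc1
      ((hint A (B - h) hA (by linarith)).add hc2) fun r hr => ?_
    have hr0 : 0 < r := by linarith [hr.1]
    have : Real.sin (r * t) ^ 2 / (r + h) ≤ Real.sin (r * t) ^ 2 / r := by
      gcongr; linarith
    rw [← Real.sin_sq_add_cos_sq (r * t), add_div]
    linarith
  rw [intervalIntegral.integral_add (hint A (B - h) hA (by linarith)) hc2, h4, ← h3] at h5
  linarith

/-- The oscillation bound transported to `radialDensity` on a window `[A, B]` on which the remaining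
power `r ^ (n - 2)`, written `r ^ (n - 1) / r` so that `n = 1` is covered, is at least `m` and the
Gaussian factor is at least `exp (-E)`. -/
lemma radial_lower (n : ℕ) {c t ε A B m E : ℝ} (hc : 0 < c) (ht : 0 < t) (hA : 0 < A)
    (hAB : A + Real.pi / (2 * t) ≤ B) (hBε : B ≤ ε) (hm0 : 0 ≤ m)
    (hm : ∀ r ∈ Set.Icc A B, m ≤ r ^ (n - 1) / r) (hE : 2 * c * B ^ 2 * t ≤ E) :
    m * Real.exp (-E) * (1 / 2 * Real.log (B / (A + Real.pi / (2 * t)))) ≤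
      ∫ r in (0 : ℝ)..ε, radialDensity n c t r := by
  have hpos : 0 < Real.pi / (2 * t) := by positivity
  have hAB' : A ≤ B := by linarith
  have hI := radialDensity_intervalIntegrable n hc ht (show 0 < ε by linarith)
  have hsub : IntervalIntegrable (radialDensity n c t) volume A B :=
    hI.mono_set (by
      rw [Set.uIcc_of_le hAB', Set.uIcc_of_le (by linarith : (0 : ℝ) ≤ ε)]
      exact Set.Icc_subset_Icc hA.le hBε)
  have hmono : ∫ r in A..B, radialDensity n c t r ≤
      ∫ r in (0 : ℝ)..ε, radialDensity n c t r := by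
    refine intervalIntegral.integral_mono_interval hA.le hAB' hBε ?_ hI
    refine (ae_restrict_iff' measurableSet_Ioc).2 (.of_forall fun r hr => ?_)
    exact radialDensity_nonneg n c t hr.1.le
  refine le_trans ?_ hmono
  refine le_trans (mul_le_mul_of_nonneg_left (sine_log_lower hA ht hAB) (by positivity)) ?_
  rw [← intervalIntegral.integral_const_mul]
  refine intervalIntegral.integral_mono_on hAB' ?_ hsub fun r hr => ?_
  · apply ContinuousOn.intervalIntegrable_of_Icc hAB'
    refine ContinuousOn.mul (by fun_prop) (ContinuousOn.div (by fun_prop) (by fun_prop) ?_)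
    intro r hr; linarith [hr.1]
  · have hr0 : 0 < r := by linarith [hr.1]
    have he : Real.exp (-E) ≤ Real.exp (-2 * c * r ^ 2 * t) := by
      apply Real.exp_le_exp.2
      have : 2 * c * r ^ 2 * t ≤ 2 * c * B ^ 2 * t := by
        have := hr.2
        gcongr
      linarith
    calc m * Real.exp (-E) * (Real.sin (r * t) ^ 2 / r)
        ≤ (r ^ (n - 1) / r) * Real.exp (-2 * c * r ^ 2 * t) * (Real.sin (r * t) ^ 2 / r) := by
          have := hm r hr
          gcongr
      _ = radialDensity n c t r := by
          unfold radialDensity; field_simp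

/-! ### Comparison with the rate -/

lemma quarter_period_le {t : ℝ} (ht : 0 < t) : Real.pi / (2 * t) ≤ 2 / t := by
  rw [div_le_div_iff₀ (by positivity) ht]
  nlinarith [Real.pi_le_four]

lemma sq_D1rate_one {t : ℝ} (ht : 0 ≤ t) : D1rate 1 t ^ 2 = t := by
  simp only [D1rate, if_true]
  rw [← Real.sqrt_eq_rpow, Real.sq_sqrt ht]

lemma sq_D1rate_two {t : ℝ} (ht : 1 ≤ t) : D1rate 2 t ^ 2 = Real.log t := by
  simp only [D1rate, if_true, show (2 : ℕ) ≠ 1 by norm_num, if_false]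
  rw [← Real.sqrt_eq_rpow, Real.sq_sqrt (Real.log_nonneg ht)]

lemma sq_D1rate_large {n : ℕ} (hn : 3 ≤ n) {t : ℝ} (ht : 0 < t) :
    D1rate n t ^ 2 = t ^ (1 - (n : ℝ) / 2) := by
  simp only [D1rate, show n ≠ 1 by omega, show n ≠ 2 by omega, if_false]
  rw [← Real.rpow_natCast, ← Real.rpow_mul ht.le]
  congr 1; push_cast; ring

lemma D1rate_nonneg (n : ℕ) {t : ℝ} (ht : 1 ≤ t) : 0 ≤ D1rate n t := by
  have := Real.log_nonneg ht
  have : 0 ≤ t := by linarith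
  unfold D1rate
  split_ifs <;> positivity

lemma radial_bounds_one (c ε : ℝ) (hc : 0 < c) (hε : 0 < ε) :
    ∃ a b T : ℝ, 0 < a ∧ 0 < b ∧ 2 ≤ T ∧ ∀ t : ℝ, T ≤ t →
      a * D1rate 1 t ^ 2 ≤ ∫ r in (0 : ℝ)..ε, radialDensity 1 c t r ∧
      ∫ r in (0 : ℝ)..ε, radialDensity 1 c t r ≤ b * D1rate 1 t ^ 2 := by
  refine ⟨1 / 10 * Real.exp (-(200 * c)) * (1 / 2 * Real.log 2), Real.pi, max 2 (10 / ε),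
    by have := Real.log_pos one_lt_two; positivity, Real.pi_pos, le_max_left _ _,
    fun t hT => ?_⟩
  have ht2 : 2 ≤ t := (le_max_left _ _).trans hT
  have ht : 0 < t := by linarith
  have htε : 10 / ε ≤ t := (le_max_right _ _).trans hT
  rw [sq_D1rate_one ht.le]
  refine ⟨?_, radial_upper_one hc ht hε⟩
  have hq := quarter_period_le ht
  have hq0 : 0 < Real.pi / (2 * t) := by positivity
  have hsum : 1 / t + Real.pi / (2 * t) ≤ 3 / t := by
    have : 1 / t + 2 / t = 3 / t := by ring
    linarith
  have h := radial_lower 1 (A := 1 / t) (B := 10 / t) (m := t / 10) (E := 200 * c) (ε := ε)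
    hc ht (by positivity) (hsum.trans (by gcongr; norm_num))
    (by rw [div_le_iff₀ hε] at htε; rw [div_le_iff₀ ht]; linarith) (by positivity)
    (fun r hr => by
      have hr0 : 0 < r := lt_of_lt_of_le (by positivity) hr.1
      have := (le_div_iff₀ ht).1 hr.2
      simp only [Nat.sub_self, pow_zero]
      rw [div_le_div_iff₀ (by norm_num) hr0]; linarith)
    (by
      rw [show 2 * c * (10 / t) ^ 2 * t = 200 * c / t by field_simp; norm_num]
      exact div_le_self (by positivity) (by linarith))
  refine le_trans ?_ h
  have hlog : Real.log 2 ≤ Real.log (10 / t / (1 / t + Real.pi / (2 * t))) := by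
    apply Real.log_le_log two_pos
    rw [le_div_iff₀ (by positivity)]
    calc 2 * (1 / t + Real.pi / (2 * t)) ≤ 2 * (3 / t) := by gcongr
      _ = 6 / t := by ring
      _ ≤ 10 / t := by gcongr; norm_num
  calc 1 / 10 * Real.exp (-(200 * c)) * (1 / 2 * Real.log 2) * t
      = t / 10 * Real.exp (-(200 * c)) * (1 / 2 * Real.log 2) := by ring
    _ ≤ _ := by gcongr

lemma radial_bounds_two (c ε : ℝ) (hc : 0 < c) (hε : 0 < ε) :
    ∃ a b T : ℝ, 0 < a ∧ 0 < b ∧ 2 ≤ T ∧ ∀ t : ℝ, T ≤ t →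
      a * D1rate 2 t ^ 2 ≤ ∫ r in (0 : ℝ)..ε, radialDensity 2 c t r ∧
      ∫ r in (0 : ℝ)..ε, radialDensity 2 c t r ≤ b * D1rate 2 t ^ 2 := by
  have hl2 := Real.log_pos one_lt_two
  have hL : 0 ≤ Real.log (1 + ε ^ 2) := Real.log_nonneg (by nlinarith)
  -- `81 = 3 ^ 4` makes `log (√t / 3) ≥ log t / 4`.
  refine ⟨Real.exp (-(2 * c)) * (1 / 8), 2 + Real.log (1 + ε ^ 2) / Real.log 2,
    max 81 (1 / ε ^ 2), by positivity, by positivity, le_trans (by norm_num) (le_max_left _ _),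
    fun t hT => ?_⟩
  have ht81 : 81 ≤ t := (le_max_left _ _).trans hT
  have ht : 0 < t := by linarith
  have htε : 1 / ε ^ 2 ≤ t := (le_max_right _ _).trans hT
  rw [sq_D1rate_two (by linarith)]
  constructor
  · have hq := quarter_period_le ht
    have hq0 : 0 < Real.pi / (2 * t) := by positivity
    have hsum : 1 / t + Real.pi / (2 * t) ≤ 3 / t := by
      have : 1 / t + 2 / t = 3 / t := by ring
      linarith
    have hs : 0 < √t := Real.sqrt_pos.2 ht
    have hss : √t * √t = t := Real.mul_self_sqrt ht.le
    have hs9 : 9 ≤ √t := Real.le_sqrt_of_sq_le (by linarith)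
    have h3 : 3 / t ≤ 1 / √t := by
      rw [div_le_div_iff₀ ht hs]; nlinarith
    have h := radial_lower 2 (A := 1 / t) (B := 1 / √t) (m := 1) (E := 2 * c) (ε := ε)
      hc ht (by positivity) (hsum.trans h3)
      (by
        rw [div_le_iff₀ hs]
        have h4 : 1 ≤ ε ^ 2 * t := by rw [div_le_iff₀ (by positivity)] at htε; linarith
        have : 0 < ε * √t := by positivity
        nlinarith)
      zero_le_one
      (fun r hr => by
        have hr0 : 0 < r := lt_of_lt_of_le (by positivity) hr.1
        simp [hr0.ne'])
      (by rw [div_pow, Real.sq_sqrt ht.le]; field_simp; norm_num)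
    refine le_trans ?_ h
    have hlog : 1 / 4 * Real.log t ≤ Real.log (1 / √t / (1 / t + Real.pi / (2 * t))) := by
      have e1 : √t / 3 ≤ 1 / √t / (1 / t + Real.pi / (2 * t)) := by
        rw [le_div_iff₀ (by positivity)]
        calc √t / 3 * (1 / t + Real.pi / (2 * t)) ≤ √t / 3 * (3 / t) := by gcongr
          _ = 1 / √t := by field_simp; nlinarith
      refine le_trans ?_ (Real.log_le_log (by positivity) e1)
      rw [Real.log_div hs.ne' (by norm_num), Real.log_sqrt ht.le]
      have h81 : Real.log 81 ≤ Real.log t := Real.log_le_log (by norm_num) ht81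
      rw [show (81 : ℝ) = 3 ^ 4 by norm_num, Real.log_pow] at h81
      push_cast at h81
      linarith
    calc Real.exp (-(2 * c)) * (1 / 8) * Real.log t
        = 1 * Real.exp (-(2 * c)) * (1 / 2 * (1 / 4 * Real.log t)) := by ring
      _ ≤ _ := by gcongr
  · refine (radial_upper_two hc ht hε).trans ?_
    have h1 : Real.log (1 + (t * ε) ^ 2) ≤ Real.log (t ^ 2 * (1 + ε ^ 2)) := by
      apply Real.log_le_log (by positivity)
      nlinarith
    rw [Real.log_mul (by positivity) (by positivity), Real.log_pow] at h1
    have h2 : Real.log 2 ≤ Real.log t := Real.log_le_log two_pos (by linarith)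
    have h3 : Real.log (1 + ε ^ 2) ≤ Real.log (1 + ε ^ 2) / Real.log 2 * Real.log t := by
      rw [div_mul_eq_mul_div, le_div_iff₀ hl2]
      gcongr
    push_cast at h1
    linarith

lemma radial_bounds_large (n : ℕ) (hn : 3 ≤ n) (c ε : ℝ) (hc : 0 < c) (hε : 0 < ε) :
    ∃ a b T : ℝ, 0 < a ∧ 0 < b ∧ 2 ≤ T ∧ ∀ t : ℝ, T ≤ t →
      a * D1rate n t ^ 2 ≤ ∫ r in (0 : ℝ)..ε, radialDensity n c t r ∧
      ∫ r in (0 : ℝ)..ε, radialDensity n c t r ≤ b * D1rate n t ^ 2 := by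
  obtain ⟨b, hb, hupper⟩ := radial_upper_large n hn hc
  refine ⟨Real.exp (-(72 * c)) * (1 / 2 * Real.log 2), b, max 2 (36 / ε ^ 2),
    by have := Real.log_pos one_lt_two; positivity, hb, le_max_left _ _, fun t hT => ?_⟩
  have ht2 : 2 ≤ t := (le_max_left _ _).trans hT
  have ht : 0 < t := by linarith
  have htε : 36 / ε ^ 2 ≤ t := (le_max_right _ _).trans hT
  rw [sq_D1rate_large hn ht]
  refine ⟨?_, hupper t ε ht hε⟩
  have hq := quarter_period_le ht
  have hq0 : 0 < Real.pi / (2 * t) := by positivity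
  have hs : 0 < √t := Real.sqrt_pos.2 ht
  have hss : √t * √t = t := Real.mul_self_sqrt ht.le
  have hs1 : 1 ≤ √t := Real.le_sqrt_of_sq_le (by linarith)
  have hsum : 1 / √t + Real.pi / (2 * t) ≤ 3 / √t := by
    have h1 : 2 / t ≤ 2 / √t := by gcongr; nlinarith
    have : 1 / √t + 2 / √t = 3 / √t := by ring
    linarith
  have hpow : t ^ (1 - (n : ℝ) / 2) = (1 / √t) ^ (n - 2) := by
    rw [one_div, inv_pow, ← Real.rpow_natCast, Real.sqrt_eq_rpow, ← Real.rpow_mul ht.le,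
      ← Real.rpow_neg ht.le, Nat.cast_sub (by omega)]
    congr 1; push_cast; ring
  have h := radial_lower n (A := 1 / √t) (B := 6 / √t) (m := t ^ (1 - (n : ℝ) / 2))
    (E := 72 * c) (ε := ε)
    hc ht (by positivity) (hsum.trans (by gcongr; norm_num))
    (by
      rw [div_le_iff₀ hs]
      have h4 : 36 ≤ ε ^ 2 * t := by rw [div_le_iff₀ (by positivity)] at htε; linarith
      have : 0 < ε * √t := by positivity
      nlinarith)
    (by positivity)
    (fun r hr => by
      have hr0 : 0 < r := lt_of_lt_of_le (by positivity) hr.1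
      have e : r ^ (n - 1) / r = r ^ (n - 2) := by
        rw [show n - 1 = n - 2 + 1 by omega, pow_succ, mul_div_assoc, div_self hr0.ne', mul_one]
      have := hr.1
      rw [e, hpow]
      gcongr)
    (by rw [div_pow, Real.sq_sqrt ht.le]; field_simp; norm_num)
  refine le_trans ?_ h
  have hlog : Real.log 2 ≤ Real.log (6 / √t / (1 / √t + Real.pi / (2 * t))) := by
    apply Real.log_le_log two_pos
    rw [le_div_iff₀ (by positivity)]
    calc 2 * (1 / √t + Real.pi / (2 * t)) ≤ 2 * (3 / √t) := by gcongr
      _ = 6 / √t := by ring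
  calc Real.exp (-(72 * c)) * (1 / 2 * Real.log 2) * t ^ (1 - (n : ℝ) / 2)
      = t ^ (1 - (n : ℝ) / 2) * Real.exp (-(72 * c)) * (1 / 2 * Real.log 2) := by ring
    _ ≤ _ := by gcongr

lemma radial_bounds (n : ℕ) (hn : 1 ≤ n) (c ε : ℝ) (hc : 0 < c) (hε : 0 < ε) :
    ∃ a b T : ℝ, 0 < a ∧ 0 < b ∧ 2 ≤ T ∧ ∀ t : ℝ, T ≤ t →
      a * D1rate n t ^ 2 ≤ ∫ r in (0 : ℝ)..ε, radialDensity n c t r ∧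
      ∫ r in (0 : ℝ)..ε, radialDensity n c t r ≤ b * D1rate n t ^ 2 := by
  rcases (by omega : n = 1 ∨ n = 2 ∨ 3 ≤ n) with rfl | rfl | h
  · exact radial_bounds_one c ε hc hε
  · exact radial_bounds_two c ε hc hε
  · exact radial_bounds_large n h c ε hc hε

theorem multiplier_sine_L2_optimal
    (n : ℕ) (hn : 1 ≤ n) (c ε₀ : ℝ) (hc : 0 < c) (hε : 0 < ε₀) :
    ∃ C₁ C₂ T : ℝ, 0 < C₁ ∧ 0 < C₂ ∧ 2 ≤ T ∧ ∀ t : ℝ, T ≤ t →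
      C₁ * D1rate n t ≤
        Real.sqrt (∫ ξ in Metric.closedBall (0 : EuclideanSpace ℝ (Fin n)) ε₀,
          Real.sin (‖ξ‖ * t) ^ 2 * Real.exp (-2 * c * ‖ξ‖ ^ 2 * t) / ‖ξ‖ ^ 2) ∧
      Real.sqrt (∫ ξ in Metric.closedBall (0 : EuclideanSpace ℝ (Fin n)) ε₀,
          Real.sin (‖ξ‖ * t) ^ 2 * Real.exp (-2 * c * ‖ξ‖ ^ 2 * t) / ‖ξ‖ ^ 2)
        ≤ C₂ * D1rate n t := by
  obtain ⟨a, b, T, ha, hb, hT, h⟩ := radial_bounds n hn c ε₀ hc hε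
  set K : ℝ := n * (volume : Measure (EuclideanSpace ℝ (Fin n))).real (Metric.ball 0 1) with hK
  have hKpos : 0 < K := by
    have h1 : (0 : ℝ) < n := by exact_mod_cast hn
    have h2 : 0 < (volume : Measure (EuclideanSpace ℝ (Fin n))).real (Metric.ball 0 1) :=
      ENNReal.toReal_pos (Metric.measure_ball_pos _ _ one_pos).ne' measure_ball_lt_top.ne
    exact mul_pos h1 h2
  refine ⟨√(K * a), √(K * b), T, by positivity, by positivity, hT, fun t ht => ?_⟩
  have hD := D1rate_nonneg n (show 1 ≤ t by linarith)
  have hmul : ∀ x : ℝ, 0 ≤ x → √(K * x) * D1rate n t = √(K * (x * D1rate n t ^ 2)) := by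
    intro x hx
    rw [← mul_assoc, Real.sqrt_mul (by positivity) (D1rate n t ^ 2), Real.sqrt_sq hD]
  rw [setIntegral_closedBall_radial n hn ε₀ hε
    (fun r => Real.sin (r * t) ^ 2 * Real.exp (-2 * c * r ^ 2 * t) / r ^ 2), ← hK,
    hmul a ha.le, hmul b hb.le]
  obtain ⟨h1, h2⟩ := h t ht
  exact ⟨Real.sqrt_le_sqrt (mul_le_mul_of_nonneg_left h1 hKpos.le),
    Real.sqrt_le_sqrt (mul_le_mul_of_nonneg_left h2 hKpos.le)⟩

end
end

section
/- Let n ≥ 1, c > 0 and ε₀ > 0. Then there exist constants C₁, C₂, T > 0 (with T ≥ 2) such that for every t ≥ T: C₁ 𝒟ₙ^{(2)}(t) ≤ ( ∫_{{ξ ∈ ℝⁿ : |ξ| ≤ ε₀}} |ξ|^{-4} sin⁴(|ξ| t) e^{-2c|ξ|² t} dξ )^{1/2} ≤ C₂ 𝒟ₙ^{(2)}(t). -/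
/-!
The integrand is radial, so polar coordinates turn the squared norm into a positive constant times
`J(t) = ∫₀^ε₀ r^(n-5) sin⁴(rt) e^{-2cr²t} dr`, and it is enough to compare `J(t)` with the square
of the rate: `t^(4-n)` for `n ≤ 3`, `log t` for `n = 4` and `t^(2-n/2)` for `n ≥ 5`.

For the upper bounds, `sin⁴(rt) ≤ (rt)⁴` is used on `(0, 1/t]` and `sin⁴ ≤ 1` beyond it when
`n ≤ 4`; when `n ≥ 5`, `sin⁴ ≤ 1` leaves a Gamma integral.

For the lower bounds with `n ≤ 3`, the interval `(0, 1/t]` suffices, by Jordan's inequality. For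
`n ≥ 4` the mass sits at frequencies where `sin⁴(rt)` oscillates, so it has to be averaged
(`sin_pow_four_average`): against a decreasing weight, shifting by a quarter period `π/(2t)`
replaces `sin⁴` by `cos⁴`, and `sin⁴ + cos⁴ ≥ 1/2`. The weight is `1/r` on `[π/(2t), 1/√t]` for
`n = 4`, which produces the logarithm, and constant on `[1/√t, 2/√t]` for `n ≥ 5`.
-/

/-!
STATEMENT 17. Optimal two-sided estimate of the `L²` norm of the multiplier
`ξ ↦ |ξ|⁻²sin²(|ξ|t)e^{-c|ξ|²t}` restricted to the ball `{|ξ| ≤ ε₀}` in `ℝⁿ`: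
it behaves exactly like `𝒟ₙ⁽²⁾(t)` for large `t`.
-/

open MeasureTheory

noncomputable section

/-- The rate `𝒟ₙ⁽²⁾(t)`. -/
def D2rate (n : ℕ) (t : ℝ) : ℝ :=
  if n ≤ 3 then t ^ ((2 : ℝ) - (n : ℝ) / 2)
  else if n = 4 then Real.log t ^ ((1 : ℝ) / 2)
  else t ^ ((1 : ℝ) - (n : ℝ) / 4)

/-- The one-dimensional integrand left by polar coordinates: Jacobian `r^(n-1)` times the squared
multiplier at radius `r`. -/
def radialIntegrand (n : ℕ) (c t r : ℝ) : ℝ :=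
  r ^ ((n : ℝ) - 5) * (Real.sin (r * t) ^ 4 * Real.exp (-2 * c * r ^ 2 * t))

lemma radialIntegrand_nonneg (n : ℕ) (c t : ℝ) {r : ℝ} (hr : 0 < r) :
    0 ≤ radialIntegrand n c t r := by
  unfold radialIntegrand
  have : 0 ≤ Real.sin (r * t) ^ 4 := by positivity
  positivity

lemma sin_pow_four_le_one (x : ℝ) : Real.sin x ^ 4 ≤ 1 := by
  have h := Real.sin_sq_le_one x
  have h0 := sq_nonneg (Real.sin x)
  nlinarith

lemma radialIntegrand_le_gauss (n : ℕ) (c t : ℝ) {r : ℝ} (hr : 0 < r) :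
    radialIntegrand n c t r ≤
      r ^ ((n : ℝ) - 5) * Real.exp (-(2 * c * t) * r ^ (2 : ℝ)) := by
  unfold radialIntegrand
  rw [Real.rpow_two, show -(2 * c * t) * r ^ 2 = -2 * c * r ^ 2 * t by ring]
  gcongr
  exact mul_le_of_le_one_left (Real.exp_pos _).le (sin_pow_four_le_one _)

lemma radialIntegrand_le_rpow (n : ℕ) {c t r : ℝ} (hc : 0 < c) (ht : 0 < t) (hr : 0 < r) :
    radialIntegrand n c t r ≤ r ^ ((n : ℝ) - 5) := by
  unfold radialIntegrand
  refine mul_le_of_le_one_right (by positivity) ?_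
  exact mul_le_one₀ (sin_pow_four_le_one _) (Real.exp_pos _).le (exp_factor_le_one hc ht r)

lemma rpow_sub_five_mul (n : ℕ) {r : ℝ} (hr : 0 < r) :
    r ^ ((n : ℝ) - 5) * r ^ 4 = r ^ ((n : ℝ) - 1) := by
  rw [← Real.rpow_natCast r 4, ← Real.rpow_add hr]
  congr 1; push_cast; ring

/-- The bound effective for `r ≤ 1/t`, from `|sin x| ≤ |x|`. -/
lemma radialIntegrand_le_low (n : ℕ) {c t r : ℝ} (hc : 0 < c) (ht : 0 < t) (hr : 0 < r) :
    radialIntegrand n c t r ≤ t ^ 4 * r ^ ((n : ℝ) - 1) := by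
  unfold radialIntegrand
  have h1 : Real.sin (r * t) ^ 4 ≤ (r * t) ^ 4 :=
    (Even.pow_abs (by decide) (Real.sin (r * t))).symm.trans_le <| by
      have := Real.abs_sin_le_abs (x := r * t)
      rw [abs_of_pos (show 0 < r * t by positivity)] at this
      gcongr
  calc _ ≤ r ^ ((n : ℝ) - 5) * ((r * t) ^ 4 * 1) := by
        gcongr
        exact exp_factor_le_one hc ht r
    _ = t ^ 4 * (r ^ ((n : ℝ) - 5) * r ^ 4) := by ring
    _ = _ := by rw [rpow_sub_five_mul n hr]

lemma radialIntegrand_measurable (n : ℕ) (c t : ℝ) : Measurable (radialIntegrand n c t) := by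
  unfold radialIntegrand
  fun_prop

lemma radialIntegrand_integrableOn {n : ℕ} (hn : 1 ≤ n) {c t : ℝ} (hc : 0 < c) (ht : 0 < t)
    (b : ℝ) : IntegrableOn (radialIntegrand n c t) (Set.Ioc 0 b) := by
  refine Measure.integrableOn_of_bounded (M := t ^ 4 * b ^ ((n : ℝ) - 1)) (by simp)
    (radialIntegrand_measurable n c t).aestronglyMeasurable ?_
  refine (ae_restrict_iff' measurableSet_Ioc).2 (Filter.Eventually.of_forall fun r hr => ?_)
  rw [Real.norm_of_nonneg (radialIntegrand_nonneg n c t hr.1)]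
  refine (radialIntegrand_le_low n hc ht hr.1).trans ?_
  have hn' : (1 : ℝ) ≤ n := by exact_mod_cast hn
  have := Real.rpow_le_rpow hr.1.le hr.2 (show 0 ≤ (n : ℝ) - 1 by linarith)
  gcongr

lemma radialIntegrand_intervalIntegrable {n : ℕ} (hn : 1 ≤ n) {c t : ℝ} (hc : 0 < c) (ht : 0 < t)
    {a b : ℝ} (ha : 0 ≤ a) (hab : a ≤ b) :
    IntervalIntegrable (radialIntegrand n c t) volume a b :=
  (intervalIntegrable_iff_integrableOn_Ioc_of_le hab).2 <|
    (radialIntegrand_integrableOn hn hc ht b).mono_set (Set.Ioc_subset_Ioc_left ha)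

lemma radial_subinterval_le {n : ℕ} (hn : 1 ≤ n) {c t : ℝ} (hc : 0 < c) (ht : 0 < t)
    {a b e : ℝ} (ha : 0 ≤ a) (hab : a ≤ b) (hbe : b ≤ e) :
    ∫ r in a..b, radialIntegrand n c t r ≤ ∫ r in (0 : ℝ)..e, radialIntegrand n c t r := by
  refine intervalIntegral.integral_mono_interval ha hab hbe ?_
    (radialIntegrand_intervalIntegrable hn hc ht le_rfl (ha.trans (hab.trans hbe)))
  exact (ae_restrict_iff' measurableSet_Ioc).2
    (Filter.Eventually.of_forall fun r hr => radialIntegrand_nonneg n c t hr.1)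

lemma setIntegral_closedBall_eq {n : ℕ} (hn : 1 ≤ n) (c : ℝ) {ε₀ : ℝ} (hε : 0 < ε₀) (t : ℝ) :
    (∫ ξ in Metric.closedBall (0 : EuclideanSpace ℝ (Fin n)) ε₀,
      Real.sin (‖ξ‖ * t) ^ 4 * Real.exp (-2 * c * ‖ξ‖ ^ 2 * t) / ‖ξ‖ ^ 4) =
    (n * volume.real (Metric.ball (0 : EuclideanSpace ℝ (Fin n)) 1)) *
      ∫ r in (0 : ℝ)..ε₀, radialIntegrand n c t r := by
  have : Nonempty (Fin n) := ⟨⟨0, hn⟩⟩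
  set f : ℝ → ℝ := (Set.Iic ε₀).indicator
    (fun r => Real.sin (r * t) ^ 4 * Real.exp (-2 * c * r ^ 2 * t) / r ^ 4) with hf
  have h1 : (∫ ξ in Metric.closedBall (0 : EuclideanSpace ℝ (Fin n)) ε₀,
      Real.sin (‖ξ‖ * t) ^ 4 * Real.exp (-2 * c * ‖ξ‖ ^ 2 * t) / ‖ξ‖ ^ 4) =
      ∫ ξ : EuclideanSpace ℝ (Fin n), f ‖ξ‖ := by
    rw [← integral_indicator Metric.isClosed_closedBall.measurableSet]
    refine integral_congr_ae (Filter.Eventually.of_forall fun ξ => ?_)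
    by_cases h : ‖ξ‖ ≤ ε₀ <;> simp [hf, Set.indicator, h]
  have h2 : ∫ y in Set.Ioi (0 : ℝ), y ^ (n - 1) • f y =
      ∫ r in (0 : ℝ)..ε₀, radialIntegrand n c t r := by
    rw [intervalIntegral.integral_of_le hε.le, ← Set.Ioi_inter_Iic,
      ← setIntegral_indicator measurableSet_Iic]
    refine setIntegral_congr_fun measurableSet_Ioi fun r hr => ?_
    have hr : 0 < r := hr
    by_cases h : r ≤ ε₀
    · have h5 := rpow_sub_five_mul n hr
      have h6 : r ^ ((n : ℝ) - 1) = r ^ (n - 1) := by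
        rw [← Real.rpow_natCast, Nat.cast_sub hn, Nat.cast_one]
      simp only [hf, Set.indicator, Set.mem_Iic, h, if_true, smul_eq_mul, radialIntegrand]
      rw [← h6, ← h5]
      field_simp
    · simp [hf, Set.indicator, h]
  rw [h1, integral_fun_norm_addHaar, finrank_euclideanSpace_fin, h2, nsmul_eq_mul, smul_eq_mul,
    mul_assoc]

/-- Averaging of `sin⁴(rt)` against a decreasing weight: the oscillating factor costs at most the
constant `1/4` and a quarter period at the left end. -/
lemma sin_pow_four_average {w : ℝ → ℝ} {a b t : ℝ} (ht : 0 < t)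
    (hab : a + Real.pi / (2 * t) ≤ b) (hw : ContinuousOn w (Set.Icc a b))
    (hanti : AntitoneOn w (Set.Icc a b)) (hw0 : ∀ r ∈ Set.Icc a b, 0 ≤ w r) :
    1 / 4 * ∫ r in (a + Real.pi / (2 * t))..b, w r ≤ ∫ r in a..b, Real.sin (r * t) ^ 4 * w r := by
  set h := Real.pi / (2 * t) with hh
  have hpos : 0 < h := by have := Real.pi_pos; positivity
  have hab' : a ≤ b := by linarith
  set g : ℝ → ℝ := fun r => Real.sin (r * t) ^ 4 * w r with hg
  have hgc : ContinuousOn g (Set.Icc a b) := by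
    refine ContinuousOn.mul ?_ hw
    fun_prop
  have hgi : IntervalIntegrable g volume a b := hgc.intervalIntegrable_of_Icc hab'
  have hg0 : 0 ≤ᵐ[volume.restrict (Set.Ioc a b)] g :=
    (ae_restrict_iff' measurableSet_Ioc).2 (Filter.Eventually.of_forall fun r hr =>
      mul_nonneg (by positivity) (hw0 r (Set.Ioc_subset_Icc_self hr)))
  have e1 : ∫ r in (a + h)..b, g r ≤ ∫ r in a..b, g r :=
    intervalIntegral.integral_mono_interval (by linarith) hab le_rfl hg0 hgi
  have e2 : ∫ r in (a + h)..b, g (r - h) ≤ ∫ r in a..b, g r := by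
    rw [intervalIntegral.integral_comp_sub_right]
    exact intervalIntegral.integral_mono_interval (by linarith) (by linarith) (by linarith) hg0 hgi
  have hsub : Set.Icc (a + h) b ⊆ Set.Icc a b := Set.Icc_subset_Icc_left (by linarith)
  have i1 : IntervalIntegrable g volume (a + h) b :=
    (hgc.mono hsub).intervalIntegrable_of_Icc hab
  have i2 : IntervalIntegrable (fun r => g (r - h)) volume (a + h) b := by
    refine ContinuousOn.intervalIntegrable_of_Icc hab (hgc.comp (by fun_prop) fun r hr => ?_)
    exact ⟨by linarith [hr.1], by linarith [hr.2]⟩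
  have i3 : IntervalIntegrable w volume (a + h) b :=
    (hw.mono hsub).intervalIntegrable_of_Icc hab
  have e3 : ∫ r in (a + h)..b, 1 / 2 * w r ≤ ∫ r in (a + h)..b, (g r + g (r - h)) := by
    refine intervalIntegral.integral_mono_on hab (i3.const_mul _) (i1.add i2) fun r hr => ?_
    have hr1 := hsub hr
    have hr2 : r - h ∈ Set.Icc a b := ⟨by linarith [hr.1], by linarith [hr.2]⟩
    have hmono : w r ≤ w (r - h) := hanti hr2 hr1 (by linarith)
    have hs : Real.sin ((r - h) * t) = -Real.cos (r * t) := by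
      rw [show (r - h) * t = r * t - Real.pi / 2 by rw [hh]; field_simp, Real.sin_sub_pi_div_two]
    simp only [hg, hs]
    have hw1 := hw0 r hr1
    have hsc := Real.sin_sq_add_cos_sq (r * t)
    set S := Real.sin (r * t)
    set C := Real.cos (r * t)
    have hC4 : 0 ≤ C ^ 4 := by positivity
    have hSC : 1 / 2 ≤ S ^ 4 + C ^ 4 := by nlinarith [sq_nonneg (S ^ 2 - C ^ 2)]
    calc 1 / 2 * w r ≤ (S ^ 4 + C ^ 4) * w r := by gcongr
      _ = S ^ 4 * w r + C ^ 4 * w r := by ring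
      _ ≤ S ^ 4 * w r + C ^ 4 * w (r - h) := by gcongr
      _ = S ^ 4 * w r + (-C) ^ 4 * w (r - h) := by ring
  rw [intervalIntegral.integral_add i1 i2, intervalIntegral.integral_const_mul] at e3
  linarith

/-- The contribution of `(0, 1/t]` is at most `t^(4-n)` in every dimension. -/
lemma radial_low_upper {n : ℕ} (hn : 1 ≤ n) {c t : ℝ} (hc : 0 < c) (ht : 0 < t) :
    ∫ r in (0 : ℝ)..t⁻¹, radialIntegrand n c t r ≤ t ^ ((4 : ℝ) - n) := by
  have hn' : (1 : ℝ) ≤ n := by exact_mod_cast hn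
  have ht1 : 0 ≤ t⁻¹ := by positivity
  have hi : IntervalIntegrable (fun r : ℝ => r ^ ((n : ℝ) - 1)) volume 0 t⁻¹ :=
    intervalIntegral.intervalIntegrable_rpow' (by linarith)
  calc _ ≤ ∫ r in (0 : ℝ)..t⁻¹, t ^ 4 * r ^ ((n : ℝ) - 1) :=
        intervalIntegral.integral_mono_on_of_le_Ioo ht1
          (radialIntegrand_intervalIntegrable hn hc ht le_rfl ht1) (hi.const_mul _)
          fun r hr => radialIntegrand_le_low n hc ht hr.1
    _ = t ^ 4 * ((t⁻¹) ^ (n : ℝ) / n) := by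
        rw [intervalIntegral.integral_const_mul, integral_rpow (Or.inl (by linarith))]
        simp only [sub_add_cancel]
        rw [Real.zero_rpow (by linarith), sub_zero]
    _ ≤ t ^ 4 * (t⁻¹) ^ (n : ℝ) := by
        gcongr
        exact div_le_self (by positivity) hn'
    _ = _ := by
        rw [Real.inv_rpow ht.le, Real.rpow_sub ht, div_eq_mul_inv, Real.rpow_ofNat]

lemma D2rate_sq_low {n : ℕ} (hn : n ≤ 3) {t : ℝ} (ht : 0 < t) :
    D2rate n t ^ 2 = t ^ ((4 : ℝ) - n) := by
  rw [D2rate, if_pos hn, ← Real.rpow_natCast, ← Real.rpow_mul ht.le]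
  congr 1; push_cast; ring

lemma D2rate_sq_four {t : ℝ} (ht : 1 ≤ t) : D2rate 4 t ^ 2 = Real.log t := by
  rw [D2rate, if_neg (by norm_num), if_pos rfl, ← Real.rpow_natCast,
    ← Real.rpow_mul (Real.log_nonneg ht)]
  norm_num

lemma D2rate_sq_high {n : ℕ} (hn : 5 ≤ n) {t : ℝ} (ht : 0 < t) :
    D2rate n t ^ 2 = t ^ ((2 : ℝ) - n / 2) := by
  rw [D2rate, if_neg (by omega), if_neg (by omega), ← Real.rpow_natCast, ← Real.rpow_mul ht.le]
  congr 1; push_cast; ring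

lemma D2rate_nonneg (n : ℕ) {t : ℝ} (ht : 1 ≤ t) : 0 ≤ D2rate n t := by
  have := Real.log_nonneg ht
  unfold D2rate
  split_ifs <;> positivity

/-! ### Dimensions one to three -/

lemma radial_upper_low_dim {n : ℕ} (hn : 1 ≤ n) (hn3 : n ≤ 3) {c ε₀ t : ℝ} (hc : 0 < c)
    (ht : 0 < t) (hε : t⁻¹ ≤ ε₀) :
    ∫ r in (0 : ℝ)..ε₀, radialIntegrand n c t r ≤ 2 * t ^ ((4 : ℝ) - n) := by
  have hn' : (n : ℝ) ≤ 3 := by exact_mod_cast hn3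
  have ht1 : 0 < t⁻¹ := by positivity
  rw [← intervalIntegral.integral_add_adjacent_intervals
    (radialIntegrand_intervalIntegrable hn hc ht le_rfl ht1.le)
    (radialIntegrand_intervalIntegrable hn hc ht ht1.le hε)]
  have h1 := radial_low_upper hn hc ht
  have hi := integrableOn_Ioi_rpow_of_lt (show (n : ℝ) - 5 < -1 by linarith) ht1
  have h2 : ∫ r in t⁻¹..ε₀, radialIntegrand n c t r ≤ t ^ ((4 : ℝ) - n) := by
    rw [intervalIntegral.integral_of_le hε]
    calc _ ≤ ∫ r in Set.Ioc t⁻¹ ε₀, r ^ ((n : ℝ) - 5) := by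
          refine setIntegral_mono_on
            ((radialIntegrand_integrableOn hn hc ht ε₀).mono_set (Set.Ioc_subset_Ioc_left ht1.le))
            (hi.mono_set Set.Ioc_subset_Ioi_self) measurableSet_Ioc fun r hr => ?_
          exact radialIntegrand_le_rpow n hc ht (ht1.trans hr.1)
      _ ≤ ∫ r in Set.Ioi t⁻¹, r ^ ((n : ℝ) - 5) := by
          refine setIntegral_mono_set hi ?_ Set.Ioc_subset_Ioi_self.eventuallyLE
          refine (ae_restrict_iff' measurableSet_Ioi).2 (Filter.Eventually.of_forall fun r hr => ?_)
          exact Real.rpow_nonneg (ht1.trans hr).le _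
      _ = t ^ ((4 : ℝ) - n) / (4 - n) := by
          rw [integral_Ioi_rpow_of_lt (by linarith) ht1, Real.inv_rpow ht.le, ← Real.rpow_neg ht.le,
            show -((n : ℝ) - 5 + 1) = 4 - n by ring, show (n : ℝ) - 5 + 1 = -(4 - n) by ring,
            neg_div_neg_eq]
      _ ≤ _ := div_le_self (by positivity) (by linarith)
  linarith

lemma radial_lower_low_dim {n : ℕ} (hn : 1 ≤ n) {c ε₀ t : ℝ} (hc : 0 < c)
    (ht : 1 ≤ t) (hε : t⁻¹ ≤ ε₀) :
    (2 / Real.pi) ^ 4 * Real.exp (-2 * c) / n * t ^ ((4 : ℝ) - n) ≤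
      ∫ r in (0 : ℝ)..ε₀, radialIntegrand n c t r := by
  have hn' : (1 : ℝ) ≤ n := by exact_mod_cast hn
  have ht0 : 0 < t := by linarith
  have ht1 : 0 < t⁻¹ := by positivity
  have hi : IntervalIntegrable (fun r : ℝ => r ^ ((n : ℝ) - 1)) volume 0 t⁻¹ :=
    intervalIntegral.intervalIntegrable_rpow' (by linarith)
  refine le_trans ?_ (radial_subinterval_le hn hc ht0 le_rfl ht1.le hε)
  set k := (2 / Real.pi) ^ 4 * Real.exp (-2 * c) with hk
  calc k / n * t ^ ((4 : ℝ) - n)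
      = k * t ^ 4 * ((t⁻¹) ^ (n : ℝ) / n) := by
        rw [Real.inv_rpow ht0.le, Real.rpow_sub ht0, Real.rpow_ofNat]
        ring
    _ = ∫ r in (0 : ℝ)..t⁻¹, k * t ^ 4 * r ^ ((n : ℝ) - 1) := by
        rw [intervalIntegral.integral_const_mul, integral_rpow (Or.inl (by linarith))]
        simp only [sub_add_cancel]
        rw [Real.zero_rpow (by linarith), sub_zero]
    _ ≤ _ := by
        refine intervalIntegral.integral_mono_on_of_le_Ioo ht1.le (hi.const_mul _)
          (radialIntegrand_intervalIntegrable hn hc ht0 le_rfl ht1.le) fun r hr => ?_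
        have hr0 : 0 < r := hr.1
        have hrt : r * t < 1 := by
          have := mul_lt_mul_of_pos_right hr.2 ht0
          rwa [inv_mul_cancel₀ ht0.ne'] at this
        have hrt0 : 0 < r * t := by positivity
        have hpi := Real.pi_gt_three
        have hsin := Real.mul_le_sin hrt0.le (by linarith)
        have hr2 : r ^ 2 * t ≤ 1 := by
          have : r ≤ r * t := le_mul_of_one_le_right hr0.le ht
          nlinarith
        have hexp : Real.exp (-2 * c) ≤ Real.exp (-2 * c * r ^ 2 * t) := by
          apply Real.exp_le_exp.2
          nlinarith
        unfold radialIntegrand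
        calc k * t ^ 4 * r ^ ((n : ℝ) - 1)
            = r ^ ((n : ℝ) - 5) * ((2 / Real.pi * (r * t)) ^ 4 * Real.exp (-2 * c)) := by
              rw [← rpow_sub_five_mul n hr0, hk]; ring
          _ ≤ _ := by gcongr

/-! ### Dimension four -/

lemma radial_upper_four {c ε₀ t : ℝ} (hc : 0 < c) (hε0 : 0 < ε₀)
    (ht : 0 < t) (hε : t⁻¹ ≤ ε₀) :
    ∫ r in (0 : ℝ)..ε₀, radialIntegrand 4 c t r ≤ 1 + Real.log ε₀ + Real.log t := by
  have ht1 : 0 < t⁻¹ := by positivity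
  rw [← intervalIntegral.integral_add_adjacent_intervals
    (radialIntegrand_intervalIntegrable (by norm_num) hc ht le_rfl ht1.le)
    (radialIntegrand_intervalIntegrable (by norm_num) hc ht ht1.le hε)]
  have h1 := radial_low_upper (n := 4) (by norm_num) hc ht
  norm_num at h1
  have h2 : ∫ r in t⁻¹..ε₀, radialIntegrand 4 c t r ≤ ∫ r in t⁻¹..ε₀, r⁻¹ := by
    refine intervalIntegral.integral_mono_on hε
      (radialIntegrand_intervalIntegrable (by norm_num) hc ht ht1.le hε) ?_ fun r hr => ?_
    · refine ContinuousOn.intervalIntegrable_of_Icc hε (continuousOn_id.inv₀ fun r hr => ?_)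
      exact (ht1.trans_le hr.1).ne'
    · have := radialIntegrand_le_rpow 4 hc ht (ht1.trans_le hr.1)
      norm_num at this
      rwa [Real.rpow_neg_one] at this
  rw [integral_inv_of_pos ht1 hε0, div_inv_eq_mul, Real.log_mul hε0.ne' ht.ne'] at h2
  linarith

lemma radial_lower_four {c ε₀ t : ℝ} (hc : 0 < c) (ht : 256 ≤ t) (hε : (√t)⁻¹ ≤ ε₀) :
    Real.exp (-2 * c) / 4 * (Real.log t / 2 - Real.log 4) ≤
      ∫ r in (0 : ℝ)..ε₀, radialIntegrand 4 c t r := by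
  have ht0 : 0 < t := by linarith
  have hpi := Real.pi_pos
  have hpi4 := Real.pi_lt_four
  set s := √t with hs
  have hss : s * s = t := Real.mul_self_sqrt ht0.le
  have hs16 : 16 ≤ s := Real.le_sqrt_of_sq_le (by linarith)
  have hs0 : 0 < s := by linarith
  set a := Real.pi / (2 * t) with ha
  have ha0 : 0 < a := by positivity
  have h2a : a + a = Real.pi / t := by rw [ha]; field_simp; ring
  have hab : a + a ≤ s⁻¹ := by
    rw [h2a, ← hss, div_le_iff₀ (by positivity)]
    field_simp
    linarith
  have hab' : a ≤ s⁻¹ := by linarith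
  refine le_trans ?_ (radial_subinterval_le (by norm_num) hc ht0 ha0.le hab' hε)
  have hwc : ContinuousOn (fun r : ℝ => r⁻¹) (Set.Icc a s⁻¹) :=
    continuousOn_id.inv₀ fun r hr => (ha0.trans_le hr.1).ne'
  have key := sin_pow_four_average ht0 hab hwc
    (fun x hx y _ hxy => inv_anti₀ (ha0.trans_le hx.1) hxy)
    (fun r hr => (inv_pos.2 (ha0.trans_le hr.1)).le)
  rw [← ha, integral_inv_of_pos (by positivity) (by positivity)] at key
  have hlog : Real.log t / 2 - Real.log 4 ≤ Real.log (s⁻¹ / (a + a)) := by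
    have : s⁻¹ / (a + a) = s / Real.pi := by
      rw [h2a, ← hss]; field_simp
    rw [this, Real.log_div hs0.ne' hpi.ne', hs, Real.log_sqrt ht0.le]
    have := Real.log_le_log hpi hpi4.le
    linarith
  calc _ ≤ Real.exp (-2 * c) * (1 / 4 * Real.log (s⁻¹ / (a + a))) := by
        rw [div_mul_eq_mul_div, mul_div_assoc]
        gcongr
        linarith
    _ ≤ Real.exp (-2 * c) * ∫ r in a..s⁻¹, Real.sin (r * t) ^ 4 * r⁻¹ := by gcongr
    _ = ∫ r in a..s⁻¹, Real.exp (-2 * c) * (Real.sin (r * t) ^ 4 * r⁻¹) := by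
        rw [intervalIntegral.integral_const_mul]
    _ ≤ _ := by
        refine intervalIntegral.integral_mono_on hab' ?_
          (radialIntegrand_intervalIntegrable (by norm_num) hc ht0 ha0.le hab') fun r hr => ?_
        · refine ContinuousOn.intervalIntegrable_of_Icc hab' ?_
          refine continuousOn_const.mul (ContinuousOn.mul ?_ hwc)
          fun_prop
        · have hr0 : 0 < r := ha0.trans_le hr.1
          have hr2 : r ^ 2 * t ≤ 1 := by
            have : r * s ≤ 1 := by
              have := mul_le_mul_of_nonneg_right hr.2 hs0.le
              rwa [inv_mul_cancel₀ hs0.ne'] at this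
            have h0 : 0 ≤ r * s := by positivity
            rw [← hss]; nlinarith
          have hexp : Real.exp (-2 * c) ≤ Real.exp (-2 * c * r ^ 2 * t) := by
            apply Real.exp_le_exp.2
            nlinarith
          unfold radialIntegrand
          have : r ^ (((4 : ℕ) : ℝ) - 5) = r⁻¹ := by
            rw [← Real.rpow_neg_one]; norm_num
          rw [this]
          have : 0 ≤ r⁻¹ * Real.sin (r * t) ^ 4 := by positivity
          nlinarith

/-! ### Dimensions five and higher -/

lemma radial_upper_high {n : ℕ} (hn : 5 ≤ n) {c ε₀ t : ℝ} (hc : 0 < c) (hε : 0 < ε₀)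
    (ht : 0 < t) :
    ∫ r in (0 : ℝ)..ε₀, radialIntegrand n c t r ≤
      (2 * c) ^ ((2 : ℝ) - n / 2) * (1 / 2) * Real.Gamma (((n : ℝ) - 5 + 1) / 2) *
        t ^ ((2 : ℝ) - n / 2) := by
  have hn' : (5 : ℝ) ≤ n := by exact_mod_cast hn
  have hb : 0 < 2 * c * t := by positivity
  have hi := integrableOn_rpow_mul_exp_neg_mul_rpow (p := 2) (s := (n : ℝ) - 5) (by linarith)
    two_pos hb
  rw [intervalIntegral.integral_of_le hε.le]
  calc _ ≤ ∫ r in Set.Ioc 0 ε₀, r ^ ((n : ℝ) - 5) * Real.exp (-(2 * c * t) * r ^ (2 : ℝ)) :=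
        setIntegral_mono_on (radialIntegrand_integrableOn (by omega) hc ht ε₀)
          (hi.mono_set Set.Ioc_subset_Ioi_self) measurableSet_Ioc
          fun r hr => radialIntegrand_le_gauss n c t hr.1
    _ ≤ ∫ r in Set.Ioi 0, r ^ ((n : ℝ) - 5) * Real.exp (-(2 * c * t) * r ^ (2 : ℝ)) := by
        refine setIntegral_mono_set hi ?_ Set.Ioc_subset_Ioi_self.eventuallyLE
        refine (ae_restrict_iff' measurableSet_Ioi).2 (Filter.Eventually.of_forall fun r hr => ?_)
        exact mul_nonneg (Real.rpow_nonneg (le_of_lt hr) _) (Real.exp_pos _).le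
    _ = _ := by
        rw [integral_rpow_mul_exp_neg_mul_rpow two_pos (by linarith) hb,
          show -((n : ℝ) - 5 + 1) / 2 = 2 - n / 2 by ring,
          Real.mul_rpow (by positivity) ht.le]
        ring

lemma radial_lower_high {n : ℕ} (hn : 5 ≤ n) {c ε₀ t : ℝ} (hc : 0 < c) (ht : 256 ≤ t)
    (hε : 2 * (√t)⁻¹ ≤ ε₀) :
    Real.exp (-8 * c) / 8 * t ^ ((2 : ℝ) - n / 2) ≤
      ∫ r in (0 : ℝ)..ε₀, radialIntegrand n c t r := by
  have hn' : (5 : ℝ) ≤ n := by exact_mod_cast hn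
  have ht0 : 0 < t := by linarith
  have hpi := Real.pi_pos
  have hpi4 := Real.pi_lt_four
  set s := √t with hs
  have hss : s * s = t := Real.mul_self_sqrt ht0.le
  have hs16 : 16 ≤ s := Real.le_sqrt_of_sq_le (by linarith)
  have hs0 : 0 < s := by linarith
  have hsi : 0 < s⁻¹ := by positivity
  have hquarter : Real.pi / (2 * t) ≤ s⁻¹ / 2 := by
    rw [← hss, div_le_iff₀ (by positivity)]
    field_simp
    linarith
  have hab : s⁻¹ ≤ 2 * s⁻¹ := by linarith
  refine le_trans ?_ (radial_subinterval_le (by omega) hc ht0 hsi.le hab hε)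
  have key := sin_pow_four_average (w := fun _ => (1 : ℝ)) (a := s⁻¹) (b := 2 * s⁻¹) ht0
    (by linarith) continuousOn_const (fun _ _ _ _ _ => le_rfl) (fun _ _ => zero_le_one)
  rw [intervalIntegral.integral_const, smul_eq_mul, mul_one] at key
  have hpow : t ^ ((2 : ℝ) - n / 2) = (s⁻¹) ^ ((n : ℝ) - 5) * s⁻¹ := by
    rw [← Real.rpow_add_one hsi.ne', hs, Real.sqrt_eq_rpow, ← Real.rpow_neg ht0.le,
      ← Real.rpow_mul ht0.le]
    congr 1; ring
  set P := (s⁻¹) ^ ((n : ℝ) - 5) with hP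
  have hP0 : 0 < P := by positivity
  calc _ = Real.exp (-8 * c) * P * (s⁻¹ / 8) := by rw [hpow]; ring
    _ ≤ Real.exp (-8 * c) * P * ∫ r in s⁻¹..(2 * s⁻¹), Real.sin (r * t) ^ 4 * 1 := by
        gcongr
        linarith
    _ = ∫ r in s⁻¹..(2 * s⁻¹), Real.exp (-8 * c) * P * (Real.sin (r * t) ^ 4 * 1) := by
        rw [intervalIntegral.integral_const_mul]
    _ ≤ _ := by
        refine intervalIntegral.integral_mono_on hab ?_
          (radialIntegrand_intervalIntegrable (by omega) hc ht0 hsi.le hab) fun r hr => ?_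
        · apply Continuous.intervalIntegrable
          fun_prop
        · have hr0 : 0 < r := hsi.trans_le hr.1
          have hr2 : r ^ 2 * t ≤ 4 := by
            have : r * s ≤ 2 := by
              have := mul_le_mul_of_nonneg_right hr.2 hs0.le
              rwa [mul_assoc, inv_mul_cancel₀ hs0.ne', mul_one] at this
            have h0 : 0 ≤ r * s := by positivity
            rw [← hss]; nlinarith
          have hexp : Real.exp (-8 * c) ≤ Real.exp (-2 * c * r ^ 2 * t) := by
            apply Real.exp_le_exp.2
            nlinarith
          have hPr : P ≤ r ^ ((n : ℝ) - 5) :=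
            Real.rpow_le_rpow hsi.le hr.1 (by linarith)
          unfold radialIntegrand
          calc _ = P * (Real.sin (r * t) ^ 4 * Real.exp (-8 * c)) := by ring
            _ ≤ _ := by gcongr

/-! ### Conclusion -/

lemma radial_two_sided {n : ℕ} (hn : 1 ≤ n) {c ε₀ : ℝ} (hc : 0 < c) (hε : 0 < ε₀) :
    ∃ A B T : ℝ, 0 < A ∧ 0 < B ∧ 2 ≤ T ∧ ∀ t : ℝ, T ≤ t →
      A * D2rate n t ^ 2 ≤ ∫ r in (0 : ℝ)..ε₀, radialIntegrand n c t r ∧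
      ∫ r in (0 : ℝ)..ε₀, radialIntegrand n c t r ≤ B * D2rate n t ^ 2 := by
  have hn' : (1 : ℝ) ≤ n := by exact_mod_cast hn
  have hpi := Real.pi_pos
  rcases lt_trichotomy n 4 with h | rfl | h
  · refine ⟨(2 / Real.pi) ^ 4 * Real.exp (-2 * c) / n, 2, max 2 ε₀⁻¹, by positivity, two_pos,
      le_max_left _ _, fun t ht => ?_⟩
    have ht2 : 2 ≤ t := (le_max_left _ _).trans ht
    have hte : t⁻¹ ≤ ε₀ := inv_le_of_inv_le₀ hε ((le_max_right _ _).trans ht)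
    rw [D2rate_sq_low (by omega) (by linarith)]
    exact ⟨radial_lower_low_dim hn hc (by linarith) hte,
      radial_upper_low_dim hn (by omega) hc (by linarith) hte⟩
  -- `t ≥ 4⁸` makes `log 4` at most a quarter of `log t / 2`; `t ≥ ε₀` absorbs `log ε₀`.
  · refine ⟨Real.exp (-2 * c) / 16, 3, max (max (4 ^ 8) ε₀) (max ε₀⁻¹ ((ε₀⁻¹) ^ 2)),
      by positivity, by norm_num, ?_, fun t ht => ?_⟩
    · exact le_trans (by norm_num) ((le_max_left _ _).trans (le_max_left _ _))
    obtain ⟨h1, h2⟩ := max_le_iff.1 ht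
    obtain ⟨ht4, hte⟩ := max_le_iff.1 h1
    obtain ⟨hti, hti2⟩ := max_le_iff.1 h2
    have ht256 : 256 ≤ t := le_trans (by norm_num) ht4
    have ht0 : 0 < t := by linarith
    have hlog4 : 1 ≤ Real.log 4 := by
      rw [Real.le_log_iff_exp_le (by norm_num)]
      linarith [Real.exp_one_lt_d9]
    have hlogt : 8 * Real.log 4 ≤ Real.log t := by
      have := Real.log_le_log (by norm_num) ht4
      rwa [Real.log_pow] at this
    have hloge := Real.log_le_log hε hte
    rw [D2rate_sq_four (by linarith)]
    constructor
    · refine le_trans ?_ (radial_lower_four hc ht256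
        (inv_le_of_inv_le₀ hε (Real.le_sqrt_of_sq_le hti2)))
      calc _ = Real.exp (-2 * c) / 4 * (Real.log t / 4) := by ring
        _ ≤ _ := by gcongr; linarith
    · have := radial_upper_four hc hε ht0 (inv_le_of_inv_le₀ hε hti)
      linarith
  · have hn5 : (5 : ℝ) ≤ n := by exact_mod_cast h
    have hG : 0 < Real.Gamma (((n : ℝ) - 5 + 1) / 2) := Real.Gamma_pos_of_pos (by linarith)
    refine ⟨Real.exp (-8 * c) / 8,
      (2 * c) ^ ((2 : ℝ) - n / 2) * (1 / 2) * Real.Gamma (((n : ℝ) - 5 + 1) / 2),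
      max 256 ((2 / ε₀) ^ 2), by positivity, by positivity,
      le_trans (by norm_num) (le_max_left _ _), fun t ht => ?_⟩
    obtain ⟨ht256, hte⟩ := max_le_iff.1 ht
    have ht0 : 0 < t := by linarith
    rw [D2rate_sq_high h ht0]
    refine ⟨radial_lower_high h hc ht256 ?_, radial_upper_high h hc hε ht0⟩
    have hs := Real.le_sqrt_of_sq_le hte
    have hs0 : 0 < √t := Real.sqrt_pos.2 ht0
    rw [div_le_iff₀ hε] at hs
    rw [← div_eq_mul_inv, div_le_iff₀ hs0]
    linarith

theorem multiplier_sine_squared_L2_optimal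
    (n : ℕ) (hn : 1 ≤ n) (c ε₀ : ℝ) (hc : 0 < c) (hε : 0 < ε₀) :
    ∃ C₁ C₂ T : ℝ, 0 < C₁ ∧ 0 < C₂ ∧ 2 ≤ T ∧ ∀ t : ℝ, T ≤ t →
      C₁ * D2rate n t ≤
        Real.sqrt (∫ ξ in Metric.closedBall (0 : EuclideanSpace ℝ (Fin n)) ε₀,
          Real.sin (‖ξ‖ * t) ^ 4 * Real.exp (-2 * c * ‖ξ‖ ^ 2 * t) / ‖ξ‖ ^ 4) ∧
      Real.sqrt (∫ ξ in Metric.closedBall (0 : EuclideanSpace ℝ (Fin n)) ε₀,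
          Real.sin (‖ξ‖ * t) ^ 4 * Real.exp (-2 * c * ‖ξ‖ ^ 2 * t) / ‖ξ‖ ^ 4)
        ≤ C₂ * D2rate n t := by
  obtain ⟨A, B, T, hA, hB, hT, H⟩ := radial_two_sided hn hc hε
  set K : ℝ := n * volume.real (Metric.ball (0 : EuclideanSpace ℝ (Fin n)) 1) with hK
  have hK0 : 0 < K := by
    have h1 : 0 < volume.real (Metric.ball (0 : EuclideanSpace ℝ (Fin n)) 1) :=
      ENNReal.toReal_pos (Metric.measure_ball_pos volume _ one_pos).ne' measure_ball_lt_top.ne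
    have h2 : (0 : ℝ) < n := by exact_mod_cast hn
    positivity
  refine ⟨√(K * A), √(K * B), T, Real.sqrt_pos.2 (by positivity), Real.sqrt_pos.2 (by positivity),
    hT, fun t ht => ?_⟩
  obtain ⟨h1, h2⟩ := H t ht
  have hD := D2rate_nonneg n (show 1 ≤ t by linarith)
  rw [setIntegral_closedBall_eq hn c hε t, ← hK]
  constructor
  · apply Real.le_sqrt_of_sq_le
    rw [mul_pow, Real.sq_sqrt (by positivity), mul_assoc]
    gcongr
  · apply Real.sqrt_le_iff.2 ⟨by positivity, ?_⟩
    rw [mul_pow, Real.sq_sqrt (by positivity), mul_assoc K B]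
    gcongr

end
end
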